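/- Let l ≥ 3 be an integer. Let Z = (S_Z, m_Z) and P = (S_P, m_P) be disjoint multisets contained in the strip 21/40 < Re s < 1 such that the set S_Z ∪ S_P has no accumulation points in ℂ off the line Re s = 21/40. Then there exists a completely multiplicative function χ : ℕ → { z ∈ ℂ : z^l = 1 } and a meromorphic function F on the half-plane Re s > 21/40 such that F(s) = ζ_χ(s) = ∑_{n=1}^∞ χ(n) n^{-s} for Re s > 1, the zeros of F in the half-plane Re s > 21/40 are exactly the points of S_Z with the zero at s having multiplicity m_Z(s), and the poles of F are exactly the points of S_P with the pole at s having order m_P(s). -/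

import Mathlib

/-!
The function `F` is built from an Euler product in which the coefficients at the primes are chosen so
that `∑ χ(p) p^{-s}` differs from the logarithm of a Weierstrass product by a function analytic on
`Re s > 0`.

* The zeros and poles are prescribed by `W(s) = ∏ E_{K_ρ}(1 / (1 + s - ρ)) ^ n_ρ`, where `E_K` is the
  Weierstrass primary factor and `n_ρ` is the multiplicity, negative at poles. For `Re s > Re ρ`,
  `E_K(1 / (1 + s - ρ))` is the exponential of minus the Laplace transform of `e^{ρ u} κ_K(u)`, with
  `κ_K(u) = e^{-u} ∑_{n ≥ K} u^n / (n+1)!`. Hence for `Re s > 1` the product is the exponential of the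
  Laplace transform of a density `φ`, and since `Re ρ < 1` the degrees `K_ρ` can be taken so large that
  `|φ(u)| ≤ e^{ϑ(u) u}` for any given `ϑ → 1` (`exists_density`, `weierstrass_local`).

* On a block `x ≤ u ≤ x + L`, Lagrange interpolation expresses `e^{-su}` through the `p^{-s}` with
  `log p` in the block. Averaging over about `e^x / x^2` disjoint grids of primes makes the
  coefficients smaller than `e^{-θ x}` for any given `θ < 1`, and for this Chebyshev's bounds suffice
  (`exists_block`). Integrating against `φ` and letting `θ → 1` along the blocks replaces `φ` by
  weights `w(p)` with `|w(p)| ≤ 1/2`, up to a function analytic on `Re s > 0` (`exists_gluing`).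

* For `l ≥ 3` the disc of radius `1/2` lies in the convex hull of the `l`-th roots of unity, so a
  greedy choice gives `χ(p)` with `χ(p)^l = 1` and bounded partial sums of `χ(p) - w(p)`. The
  series `∑ (χ(p) - w(p)) p^{-s}` then continues to `Re s > 0` (`exists_rounding`,
  `exists_continuation_of_bounded_sums`, `exists_unimodular_primes`).

* The prime powers `p^k` with `k ≥ 2` contribute to the logarithm of the Euler product a function
  analytic on `Re s > 1/2` (`helsonZeta_multExt`, `differentiableAt_tsum_logTail`). So the zeta
  function continues as `W` times the exponential of a function analytic on `Re s > 1/2`.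
-/

open Complex Filter Set

/-- A completely multiplicative function: `χ 1 = 1` and `χ (m*n) = χ m * χ n`. -/
def CompletelyMultiplicative (χ : ℕ → ℂ) : Prop :=
  χ 1 = 1 ∧ ∀ m n : ℕ, χ (m * n) = χ m * χ n

/-- The Helson zeta function `ζ_χ(s) = ∑_{n ≥ 1} χ(n) n^{-s}`. -/
noncomputable def helsonZeta (χ : ℕ → ℂ) (s : ℂ) : ℂ :=
  ∑' n : ℕ, χ (n + 1) * ((n : ℂ) + 1) ^ (-s)

/-- `F` has a zero of multiplicity `k` at `s`. -/
def ZeroOfOrder (F : ℂ → ℂ) (s : ℂ) (k : ℕ) : Prop :=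
  ∃ g : ℂ → ℂ, AnalyticAt ℂ g s ∧ g s ≠ 0 ∧ ∀ᶠ z in nhds s, F z = (z - s) ^ k * g z

/-- `F` has a pole of order `k` at `s`. -/
def PoleOfOrder (F : ℂ → ℂ) (s : ℂ) (k : ℕ) : Prop :=
  ∃ g : ℂ → ℂ, AnalyticAt ℂ g s ∧ g s ≠ 0 ∧
    ∀ᶠ z in nhdsWithin s {s}ᶜ, F z = (z - s) ^ (-(k : ℤ)) * g z

open scoped Topology

/-! ### Rounding to roots of unity -/

/-- One greedy step. The discrepancies `D a` are at least `-1` and sum to `0`; after adding the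
weights `lam`, some coordinate `b` is nonnegative, and a unit is taken from it. -/
lemma round_step {l : ℕ} (D lam : Fin l → ℝ) (hD : ∀ a, -1 ≤ D a) (hs : ∑ a, D a = 0)
    (hl : ∀ a, 0 ≤ lam a) (hls : ∑ a, lam a = 1) :
    ∃ b : Fin l, (∀ a, -1 ≤ D a + lam a - (if a = b then 1 else 0)) ∧
      ∑ a, (D a + lam a - (if a = b then 1 else 0)) = 0 := by
  obtain ⟨b, hb⟩ : ∃ b, 0 ≤ D b + lam b := by
    by_contra! h
    have h1 : ∑ a, (D a + lam a) = 1 := by rw [Finset.sum_add_distrib, hs, hls]; norm_num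
    have h2 : ∑ a, (D a + lam a) ≤ 0 := Finset.sum_nonpos fun a _ => (h a).le
    linarith
  refine ⟨b, fun a => ?_, ?_⟩
  · split_ifs with h
    · subst h; linarith
    · linarith [hD a, hl a]
  · rw [Finset.sum_sub_distrib, Finset.sum_add_distrib, hs, hls]; simp

/-- The disc of radius `1/2` lies in the convex hull of the `l`-th roots of unity `ω a`: the weights
`(1 + 2 Re (w * conj (ω a))) / l` represent `w`. This uses `∑ ω a = ∑ (ω a) ^ 2 = 0`, and the second
sum vanishes only because `3 ≤ l`. -/
lemma root_weights {l : ℕ} (hl : 3 ≤ l) :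
    ∃ ω : Fin l → ℂ, (∀ a, ω a ^ l = 1) ∧ ∀ w : ℂ, ‖w‖ ≤ 1 / 2 →
      ∃ lam : Fin l → ℝ, (∀ a, 0 ≤ lam a) ∧ ∑ a, lam a = 1 ∧ ∑ a, (lam a : ℂ) * ω a = w := by
  have hl0 : l ≠ 0 := by omega
  have hlC : (l : ℂ) ≠ 0 := by exact_mod_cast hl0
  set z : ℂ := cexp (2 * Real.pi * I / l) with hz
  have hprim : IsPrimitiveRoot z l := Complex.isPrimitiveRoot_exp l hl0
  have hzl : z ^ l = 1 := hprim.pow_eq_one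
  have hznorm : ‖z‖ = 1 := Complex.norm_eq_one_of_pow_eq_one hzl hl0
  have hzc : (starRingEnd ℂ) z = z⁻¹ := by
    rw [Complex.inv_def, Complex.normSq_eq_norm_sq, hznorm]; simp
  have hz0 : z ≠ 0 := fun h => by rw [h] at hznorm; simp at hznorm
  have hsum : ∀ j : ℕ, 0 < j → j < l → ∑ a : Fin l, (z ^ j) ^ (a : ℕ) = 0 := by
    intro j hj hjl
    rw [Fin.sum_univ_eq_sum_range (fun i => (z ^ j) ^ i) l]
    have h1 : z ^ j ≠ 1 := hprim.pow_ne_one_of_pos_of_lt hj.ne' hjl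
    rw [geom_sum_eq h1, ← pow_mul, mul_comm, pow_mul, hzl]; simp
  refine ⟨fun a => z ^ (a : ℕ), fun a => by
    rw [← pow_mul, mul_comm, pow_mul, hzl, one_pow], fun w hw => ?_⟩
  have hlam : ∀ a : Fin l, (((1 / l : ℝ) * (1 + 2 * (w * (starRingEnd ℂ) (z ^ (a : ℕ))).re) : ℝ) : ℂ)
      = (1 / l) * (1 + (w * (z ^ (a : ℕ))⁻¹ + (starRingEnd ℂ) w * z ^ (a : ℕ))) := by
    intro a
    have := Complex.add_conj (w * (starRingEnd ℂ) (z ^ (a : ℕ)))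
    rw [map_mul, Complex.conj_conj, map_pow, hzc, inv_pow] at this
    rw [map_pow, hzc, inv_pow, this]
    push_cast
    ring
  have hs1 : ∑ a : Fin l, z ^ (a : ℕ) = 0 := by simpa using hsum 1 (by norm_num) (by omega)
  have hs2 : ∑ a : Fin l, (z ^ (a : ℕ)) * (z ^ (a : ℕ)) = 0 := by
    rw [← hsum 2 (by norm_num) (by omega)]
    exact Finset.sum_congr rfl fun a _ => by ring
  have hs1' : ∑ a : Fin l, (z ^ (a : ℕ))⁻¹ = 0 := by
    have := congrArg (starRingEnd ℂ) hs1
    simpa [hzc] using this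
  refine ⟨fun a => (1 / l : ℝ) * (1 + 2 * (w * (starRingEnd ℂ) (z ^ (a : ℕ))).re), ?_, ?_, ?_⟩
  · intro a
    have h1 : |(w * (starRingEnd ℂ) (z ^ (a : ℕ))).re| ≤ 1 / 2 := by
      refine (Complex.abs_re_le_norm _).trans ?_
      rw [norm_mul, RCLike.norm_conj, norm_pow, hznorm]; simpa using hw
    have := abs_le.mp h1
    have : (0:ℝ) ≤ 1 + 2 * (w * (starRingEnd ℂ) (z ^ (a : ℕ))).re := by linarith
    positivity
  · have : ((∑ a : Fin l, (1 / l : ℝ) * (1 + 2 * (w * (starRingEnd ℂ) (z ^ (a : ℕ))).re) : ℝ) : ℂ)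
        = 1 := by
      rw [Complex.ofReal_sum]
      simp_rw [hlam]
      rw [← Finset.mul_sum, Finset.sum_add_distrib, Finset.sum_add_distrib, ← Finset.mul_sum,
        ← Finset.mul_sum, hs1, hs1']
      simp [hlC]
    exact_mod_cast this
  · simp_rw [hlam]
    have : ∀ a : Fin l, (1 / (l:ℂ)) * (1 + (w * (z ^ (a : ℕ))⁻¹ + (starRingEnd ℂ) w * z ^ (a : ℕ)))
        * z ^ (a : ℕ) = (1 / l) * (z ^ (a : ℕ) + w + (starRingEnd ℂ) w *
          (z ^ (a : ℕ) * z ^ (a : ℕ))) := by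
      intro a
      have : z ^ (a : ℕ) ≠ 0 := pow_ne_zero _ hz0
      field_simp
      ring
    simp_rw [this]
    rw [← Finset.mul_sum, Finset.sum_add_distrib, Finset.sum_add_distrib, ← Finset.mul_sum,
        hs1, hs2]
    simp
    field_simp

/-- Small complex weights `w n` are rounded greedily to `l`-th roots of unity so that all partial
sums of the differences, taken over the `n` with `P n`, stay bounded: the partial sum is
`-∑ D a * ω a` for the discrepancy vector `D` of `round_step`. -/
lemma exists_rounding {l : ℕ} (hl : 3 ≤ l) (P : ℕ → Prop) [DecidablePred P] (w : ℕ → ℂ)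
    (hw : ∀ n, ‖w n‖ ≤ 1 / 2) :
    ∃ c : ℕ → ℂ, (∀ n, c n ^ l = 1) ∧
      ∀ N, ‖∑ n ∈ Finset.range N, (if P n then c n - w n else 0)‖ ≤ 2 * l := by
  obtain ⟨ω, hω, hlamex⟩ := root_weights hl
  choose lam hlam0 hlam1 hlamw using fun n => hlamex (w n) (hw n)
  let St := {D : Fin l → ℝ // (∀ a, -1 ≤ D a) ∧ ∑ a, D a = 0}
  choose bb hbb using fun (D : St) (n : ℕ) =>
    round_step D.1 (lam n) D.2.1 D.2.2 (hlam0 n) (hlam1 n)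
  let D : ℕ → St := fun n => Nat.rec ⟨fun _ => 0, by simp, by simp⟩ (fun n D =>
    if P n then ⟨fun a => D.1 a + lam n a - (if a = bb D n then 1 else 0), hbb D n⟩ else D) n
  have hDs : ∀ n, D (n + 1) = if P n then
    ⟨fun a => (D n).1 a + lam n a - (if a = bb (D n) n then 1 else 0), hbb (D n) n⟩ else D n :=
    fun n => rfl
  refine ⟨fun n => ω (bb (D n) n), fun n => hω _, fun N => ?_⟩
  have key : ∀ N, ∑ n ∈ Finset.range N, (if P n then ω (bb (D n) n) - w n else 0)
      = - ∑ a, ((D N).1 a : ℂ) * ω a := by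
    intro N
    induction N with
    | zero => simp [D]
    | succ N ih =>
      rw [Finset.sum_range_succ, ih, hDs]
      split_ifs with h
      · have : ∀ a, (((D N).1 a + lam N a - (if a = bb (D N) N then 1 else 0) : ℝ) : ℂ) * ω a
            = ((D N).1 a : ℂ) * ω a + lam N a * ω a - (if a = bb (D N) N then ω a else 0) := by
          intro a
          split_ifs <;> push_cast <;> ring
        simp_rw [this]
        rw [Finset.sum_sub_distrib, Finset.sum_add_distrib, hlamw]
        simp
        ring
      · simp
  rw [key, norm_neg]
  have hωn : ∀ a, ‖ω a‖ = 1 := fun a => Complex.norm_eq_one_of_pow_eq_one (hω a) (by omega)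
  calc ‖∑ a, ((D N).1 a : ℂ) * ω a‖ ≤ ∑ a, ‖((D N).1 a : ℂ) * ω a‖ := norm_sum_le _ _
    _ = ∑ a, |(D N).1 a| := by simp [hωn]
    _ ≤ ∑ a, ((D N).1 a + 2) := by
      refine Finset.sum_le_sum fun a _ => ?_
      have := (D N).2.1 a
      rw [abs_le]; constructor <;> linarith
    _ = 2 * l := by
      rw [Finset.sum_add_distrib, (D N).2.2]; simp; ring

/-! ### Continuation of Dirichlet series with bounded partial sums -/

/-- Partial summation: a Dirichlet series with bounded partial sums of its coefficients continues
to `Re s > 0`, as `s` times the Mellin transform at `-s` of the summatory function. -/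
lemma exists_continuation_of_bounded_sums (f : ℕ → ℂ) (B C : ℝ) (hB : ∀ n, ‖f n‖ ≤ B)
    (hC : ∀ N, ‖∑ n ∈ Finset.range N, f n‖ ≤ C) (h0 : f 0 = 0) :
    ∃ g : ℂ → ℂ, (∀ s : ℂ, 0 < s.re → DifferentiableAt ℂ g s) ∧
      ∀ s : ℂ, 1 < s.re → LSeries f s = g s := by
  have hC' : ∀ n, ‖∑ k ∈ Finset.Icc 1 n, f k‖ ≤ C := by
    intro n
    have := hC (n + 1)
    rwa [Finset.range_eq_Ico, Finset.sum_eq_sum_Ico_succ_bot (by omega), h0, zero_add] at this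
  set S : ℝ → ℂ := (Ioi (1:ℝ)).indicator fun t => ∑ k ∈ Finset.Icc 1 ⌊t⌋₊, f k with hS
  have hSb : ∀ t, ‖S t‖ ≤ C := by
    intro t
    refine (norm_indicator_le_norm_self _ _).trans (hC' _)
  have hmeas : Measurable S := by
    refine Measurable.indicator ?_ measurableSet_Ioi
    exact (measurable_from_nat (f := fun n => ∑ k ∈ Finset.Icc 1 n, f k)).comp Nat.measurable_floor
  refine ⟨fun s => s * mellin S (-s), fun s hs => ?_, fun s hs => ?_⟩
  · refine differentiableAt_id.mul ?_
    have : DifferentiableAt ℂ (mellin S) (-s) := by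
      refine mellin_differentiableAt_of_isBigO_rpow (a := 0) (b := -s.re - 1) ?_ ?_ ?_ ?_ ?_
      · refine MeasureTheory.LocallyIntegrable.locallyIntegrableOn ?_ _
        refine (MeasureTheory.locallyIntegrable_const (C:ℝ)).mono hmeas.aestronglyMeasurable ?_
        exact Eventually.of_forall fun t => (hSb t).trans (le_abs_self _)
      · refine Asymptotics.IsBigO.of_bound C (Eventually.of_forall fun t => ?_)
        simpa using hSb t
      · simpa using hs
      · refine Asymptotics.IsBigO.of_bound 0 ?_
        have : ∀ᶠ t : ℝ in 𝓝[>] 0, t < 1 := nhdsWithin_le_nhds (eventually_lt_nhds one_pos)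
        filter_upwards [this] with t ht
        simp [hS, not_lt.mpr ht.le]
      · simp
    exact DifferentiableAt.fun_comp' s this differentiableAt_id.neg
  · rw [LSeries_eq_mul_integral f (r := 0) le_rfl (by linarith)]
    · congr 1
      rw [mellin, ← MeasureTheory.integral_indicator measurableSet_Ioi,
        ← MeasureTheory.integral_indicator measurableSet_Ioi]
      congr 1
      ext t
      by_cases h : 1 < t
      · have : 0 < t := by linarith
        simp only [indicator, mem_Ioi, h, this, if_true, hS, smul_eq_mul]
        rw [mul_comm]; congr 2; ring
      · simp [hS, indicator, h]
    · exact LSeriesSummable_of_bounded_of_one_lt_re (m := B) (fun n _ => hB n) hs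
    · refine Asymptotics.IsBigO.of_bound C (Eventually.of_forall fun n => ?_)
      simpa using hC' n

/-! ### Interpolation of exponentials at logarithms of primes -/

/-- Lagrange interpolation of `e^{-su}` at `k` nodes of `[x, x + L]`. The Taylor polynomial of degree
less than `k` at `x` is reproduced exactly, so only the Taylor remainder contributes to the error. -/
lemma lagrange_exp_error {ι : Type*} [Fintype ι] [DecidableEq ι] (v : ι → ℝ)
    (hv : Function.Injective v) {x L R Λ : ℝ} (hx : 0 ≤ x)
    (hvI : ∀ i, v i ∈ Icc x (x + L)) {u : ℝ} (hu : u ∈ Icc x (x + L))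
    (hΛ : ∀ i, |(Lagrange.basis Finset.univ v i).eval u| ≤ Λ)
    (hk2 : 2 * (R * L) ≤ Fintype.card ι)
    {s : ℂ} (hsR : ‖s‖ ≤ R) (hs0 : 0 ≤ s.re) :
    ‖cexp (-s * u) - ∑ i, ((Lagrange.basis Finset.univ v i).eval u : ℝ) * cexp (-s * v i)‖
      ≤ (1 + Fintype.card ι * Λ) * ((R * L) ^ Fintype.card ι / (Fintype.card ι).factorial
        * 2) := by
  set k := Fintype.card ι with hk
  set b : ι → ℝ := fun i => (Lagrange.basis Finset.univ v i).eval u with hb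
  have hR : 0 ≤ R := (norm_nonneg s).trans hsR
  have hex : ∀ j < k, ∑ i, b i * (v i - x) ^ j = (u - x) ^ j := by
    intro j hj
    have h1 := Lagrange.eq_interpolate (s := Finset.univ) (v := v) (hv.injOn)
      (f := (Polynomial.X - Polynomial.C x) ^ j) (by
        rw [Polynomial.degree_pow, Polynomial.degree_X_sub_C]
        simpa [Finset.card_univ] using hj)
    have h2 := congrArg (Polynomial.eval u) h1
    rw [Lagrange.interpolate_apply] at h2
    simp only [Polynomial.eval_pow, Polynomial.eval_sub, Polynomial.eval_X, Polynomial.eval_C,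
      Polynomial.eval_finsetSum, Polynomial.eval_mul] at h2
    rw [h2]
    exact Finset.sum_congr rfl fun i _ => mul_comm _ _
  set ε := (R * L) ^ k / k.factorial * 2 with hε
  have hrem : ∀ t ∈ Icc x (x + L),
      ‖cexp (-s * (t - x : ℝ)) - ∑ j ∈ Finset.range k, (-s * (t - x : ℝ)) ^ j / j.factorial‖ ≤ ε := by
    intro t ht
    have hn : ‖-s * ((t - x : ℝ) : ℂ)‖ ≤ R * L := by
      rw [norm_mul, norm_neg, Complex.norm_real, Real.norm_of_nonneg (by linarith [ht.1])]
      exact mul_le_mul hsR (by linarith [ht.2]) (by linarith [ht.1]) hR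
    refine (Complex.exp_bound' ?_).trans ?_
    · rw [div_le_iff₀ (by positivity)]
      rw [Nat.cast_succ]
      linarith
    rw [hε]
    gcongr
  have hfac : ∀ t : ℝ, cexp (-s * t) = cexp (-s * x) * cexp (-s * (t - x : ℝ)) := by
    intro t; rw [← Complex.exp_add]; push_cast; congr 1; ring
  have hpoly : ∑ j ∈ Finset.range k, (-s * (u - x : ℝ)) ^ j / j.factorial
      = ∑ i, (b i : ℂ) * ∑ j ∈ Finset.range k, (-s * (v i - x : ℝ)) ^ j / j.factorial := by
    simp_rw [Finset.mul_sum]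
    rw [Finset.sum_comm]
    refine Finset.sum_congr rfl fun j hj => ?_
    have := congrArg (Complex.ofReal) (hex j (Finset.mem_range.mp hj))
    rw [mul_pow (-s), ← Complex.ofReal_pow, ← this, Complex.ofReal_sum, Finset.mul_sum, Finset.sum_div]
    refine Finset.sum_congr rfl fun i _ => ?_
    rw [mul_pow (-s)]; push_cast; ring
  have hmain : cexp (-s * u) - ∑ i, (b i : ℂ) * cexp (-s * v i) = cexp (-s * x) *
      ((cexp (-s * (u - x : ℝ)) - ∑ j ∈ Finset.range k, (-s * (u - x : ℝ)) ^ j / j.factorial)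
      - ∑ i, (b i : ℂ) * (cexp (-s * (v i - x : ℝ)) -
          ∑ j ∈ Finset.range k, (-s * (v i - x : ℝ)) ^ j / j.factorial)) := by
    rw [hpoly, hfac u]
    simp_rw [mul_sub, Finset.sum_sub_distrib]
    have : ∀ i, (b i : ℂ) * cexp (-s * v i) =
      cexp (-s * x) * ((b i : ℂ) * cexp (-s * (v i - x : ℝ))) := by
      intro i; rw [hfac (v i)]; ring
    simp_rw [this, ← Finset.mul_sum]
    ring
  have hex1 : ‖cexp (-s * x)‖ ≤ 1 := by
    rw [Complex.norm_exp]
    simp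
    positivity
  rw [hmain, norm_mul]
  calc _ ≤ 1 * (ε + ∑ i : ι, Λ * ε) := by
        refine mul_le_mul hex1 ?_ (norm_nonneg _) zero_le_one
        refine (norm_sub_le _ _).trans (add_le_add (hrem u hu) ?_)
        refine (norm_sum_le _ _).trans (Finset.sum_le_sum fun i _ => ?_)
        rw [norm_mul, Complex.norm_real]
        exact mul_le_mul (hΛ i) (hrem _ (hvI i)) (norm_nonneg _) ((abs_nonneg _).trans (hΛ i))
    _ = _ := by rw [Finset.sum_const, Finset.card_univ]; simp; ring

/-- A weak lower bound for the number of primes in `(e^x, e^{x+3}]`, which follows from Chebyshev's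
bounds for `θ`. -/
lemma many_primes {x : ℝ} (hx : 30 ≤ x) :
    Real.exp x / x ≤
      ((Finset.Ioc ⌊Real.exp x⌋₊ ⌊Real.exp (x + 3)⌋₊).filter Nat.Prime).card := by
  set y := Real.exp x with hy
  set Y := Real.exp (x + 3) with hY
  have hypos : 0 < y := Real.exp_pos _
  have hYpos : 0 < Y := Real.exp_pos _
  have he : (2.7182818283 : ℝ) < Real.exp 1 := Real.exp_one_gt_d9
  have he3 : (20 : ℝ) ≤ Real.exp 3 := by
    have : Real.exp 3 = Real.exp 1 ^ 3 := by rw [← Real.exp_nat_mul]; norm_num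
    rw [this]
    calc (20 : ℝ) ≤ 2.7182818283 ^ 3 := by norm_num
      _ ≤ _ := by gcongr
  have hYy : Y = y * Real.exp 3 := by rw [hY, hy, Real.exp_add]
  have hY20 : 20 * y ≤ Y := by rw [hYy]; nlinarith
  have hlogY : Real.log Y = x + 3 := Real.log_exp _
  have hlog2 : (0.69 : ℝ) < Real.log 2 := by linarith [Real.log_two_gt_d9]
  have hlog2' : Real.log 2 < 0.7 := by linarith [Real.log_two_lt_d9]
  have hyx : x + 5 ≤ y := by
    have := Real.quadratic_le_exp_of_nonneg (show (0:ℝ) ≤ x by linarith)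
    nlinarith
  have hY1 : 1 ≤ Y := by linarith
  have h1 := Chebyshev.theta_ge' hY1
  have h2 := Chebyshev.theta_le_log4_mul_x hypos.le
  have hlog4 : Real.log 4 = 2 * Real.log 2 := by
    rw [show (4:ℝ) = 2 ^ 2 by norm_num, Real.log_pow]; norm_num
  have h3 : Real.log (Y + 2) ≤ y := by
    calc Real.log (Y + 2) ≤ Real.log (2 * Y) := Real.log_le_log (by linarith) (by linarith)
      _ = Real.log 2 + (x + 3) := by rw [Real.log_mul (by norm_num) hYpos.ne', hlogY]
      _ ≤ y := by linarith
  have h4 : 2 * √Y * Real.log Y ≤ y := by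
    have hs : √Y = Real.exp ((x + 3) / 2) := by
      rw [hY, Real.sqrt_eq_rpow, ← Real.exp_mul]; ring_nf
    have ht : x + 3 ≤ 4 * Real.exp ((x + 3) / 4) := by
      linarith [Real.add_one_le_exp ((x + 3) / 4)]
    rw [hlogY, hs]
    calc 2 * Real.exp ((x + 3) / 2) * (x + 3)
        ≤ 2 * Real.exp ((x + 3) / 2) * (4 * Real.exp ((x + 3) / 4)) := by gcongr
      _ = 8 * Real.exp (3 * (x + 3) / 4) := by
        rw [show 3 * (x + 3) / 4 = (x + 3) / 2 + (x + 3) / 4 by ring, Real.exp_add]; ring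
      _ ≤ Real.exp 3 * Real.exp (3 * (x + 3) / 4) := by gcongr; linarith
      _ = Real.exp (3 + 3 * (x + 3) / 4) := by rw [Real.exp_add]
      _ ≤ y := Real.exp_le_exp.mpr (by linarith)
  have hdiff : 2 * y ≤ Chebyshev.theta Y - Chebyshev.theta y := by
    rw [hlog4] at h2
    nlinarith
  have hfl : ⌊y⌋₊ ≤ ⌊Y⌋₊ := Nat.floor_le_floor (by linarith)
  have hsum : Chebyshev.theta Y - Chebyshev.theta y =
      ∑ p ∈ (Finset.Ioc ⌊y⌋₊ ⌊Y⌋₊).filter Nat.Prime, Real.log p := by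
    rw [Chebyshev.theta, Chebyshev.theta, sub_eq_iff_eq_add, Finset.sum_filter, Finset.sum_filter,
      Finset.sum_filter, ← Finset.sum_Ioc_consecutive _ (Nat.zero_le _) hfl]
    ring
  have hle : ∑ p ∈ (Finset.Ioc ⌊y⌋₊ ⌊Y⌋₊).filter Nat.Prime, Real.log p ≤
      ((Finset.Ioc ⌊y⌋₊ ⌊Y⌋₊).filter Nat.Prime).card * (x + 3) := by
    rw [← nsmul_eq_mul]
    refine Finset.sum_le_card_nsmul _ _ _ fun p hp => ?_
    rw [Finset.mem_filter, Finset.mem_Ioc] at hp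
    rw [← hlogY]
    exact Real.log_le_log (by exact_mod_cast hp.2.pos) ((Nat.le_floor_iff hYpos.le).mp hp.1.2)
  rw [div_le_iff₀ (by linarith)]
  have hc : (0:ℝ) ≤ ((Finset.Ioc ⌊y⌋₊ ⌊Y⌋₊).filter Nat.Prime).card := by positivity
  nlinarith

/-- For each `n < N` there are `Q * r` primes, in increasing order, with logarithm in
`[x + 6 n, x + 6 n + 3]`; the `i`-th and the `j`-th of them differ by at least `j - i`. -/
lemma exists_nodes {x : ℝ} (hx : 30 ≤ x) (N r Q : ℕ) (hQ : (Q * r : ℝ) ≤ Real.exp x / x) :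
    ∃ node : Fin N → ℕ → ℕ, (∀ n, ∀ j < Q * r, (node n j).Prime ∧
        x + 6 * n ≤ Real.log (node n j) ∧ Real.log (node n j) ≤ x + 6 * n + 3) ∧
      ∀ n, ∀ j < Q * r, ∀ i < j, node n i + (j - i) ≤ node n j := by
  have hmono : ∀ n : Fin N, Q * r ≤ ((Finset.Ioc ⌊Real.exp (x + 6 * n)⌋₊
      ⌊Real.exp (x + 6 * n + 3)⌋₊).filter Nat.Prime).card := by
    intro n
    have hn0 : (0:ℝ) ≤ n := by positivity
    have h1 := many_primes (x := x + 6 * n) (by linarith)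
    have h2 : Real.exp x / x ≤ Real.exp (x + 6 * n) / (x + 6 * n) := by
      rw [div_le_div_iff₀ (by linarith) (by linarith), Real.exp_add]
      have h3 := Real.add_one_le_exp (6 * (n:ℝ))
      have h4 := Real.exp_pos x
      have : x + 6 * n ≤ Real.exp (6 * n) * x := by nlinarith
      nlinarith
    exact_mod_cast hQ.trans (h2.trans h1)
  refine ⟨fun n j => if h : j < Q * r then Finset.orderEmbOfCardLe _ (hmono n) ⟨j, h⟩ else 0, ?_, ?_⟩
  · intro n j hj
    simp only [hj, dif_pos]
    have := Finset.orderEmbOfCardLe_mem _ (hmono n) ⟨j, hj⟩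
    rw [Finset.mem_filter, Finset.mem_Ioc] at this
    obtain ⟨⟨h1, h2⟩, h3⟩ := this
    have hp : (0:ℝ) < ((Finset.orderEmbOfCardLe _ (hmono n) ⟨j, hj⟩ : ℕ) : ℝ) := by
      exact_mod_cast h3.pos
    refine ⟨h3, ?_, ?_⟩
    · rw [Real.le_log_iff_exp_le hp]
      exact ((Nat.floor_lt (Real.exp_pos _).le).mp h1).le
    · rw [Real.log_le_iff_le_exp hp]
      exact (Nat.le_floor_iff (Real.exp_pos _).le).mp h2
  · intro n j hj i hij
    induction j with
    | zero => omega
    | succ j ih =>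
      have hj' : j < Q * r := by omega
      have hlt : (Finset.orderEmbOfCardLe _ (hmono n) ⟨j, hj'⟩ : ℕ) <
          Finset.orderEmbOfCardLe _ (hmono n) ⟨j + 1, hj⟩ :=
        (Finset.orderEmbOfCardLe _ (hmono n)).strictMono (by simp)
      rcases Nat.lt_succ_iff_lt_or_eq.mp hij with h | h
      · have := ih hj' h
        simp only [hj, hj', dif_pos, h.trans hj'] at this ⊢
        omega
      · subst h
        simp only [hj, hj', dif_pos]
        omega

/-- Size of the Lagrange basis for nodes in `N` groups of `r`: two nodes of the same group are at
distance at least `x^{-3}`, and nodes of different groups are at distance at least `1`. -/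
lemma basis_bound {N r : ℕ} (v : Fin N × Fin r → ℝ) {x L : ℝ} (hx : 1 ≤ x) (hL : 1 ≤ L)
    (hvI : ∀ i, v i ∈ Icc x (x + L)) {u : ℝ} (hu : u ∈ Icc x (x + L))
    (hsep : ∀ i j, i ≠ j → |(v i - v j)⁻¹| ≤ if i.1 = j.1 then x ^ 3 else 1) (i : Fin N × Fin r) :
    |(Lagrange.basis Finset.univ v i).eval u| ≤ L ^ (N * r) * (x ^ 3) ^ r := by
  have hx3 : (1:ℝ) ≤ x ^ 3 := one_le_pow₀ hx
  rw [Lagrange.basis, Polynomial.eval_prod, Finset.abs_prod]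
  calc _ ≤ ∏ j ∈ Finset.univ.erase i, (L * if i.1 = j.1 then x ^ 3 else 1) := by
        refine Finset.prod_le_prod (fun _ _ => abs_nonneg _) fun j hj => ?_
        have hji : i ≠ j := (Finset.ne_of_mem_erase hj).symm
        rw [Lagrange.basisDivisor]
        simp only [Polynomial.eval_mul, Polynomial.eval_C, Polynomial.eval_sub, Polynomial.eval_X]
        rw [abs_mul, mul_comm]
        refine mul_le_mul ?_ (hsep i j hji) (abs_nonneg _) (by linarith)
        rw [abs_le]
        have := hvI j
        constructor <;> linarith [this.1, this.2, hu.1, hu.2]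
    _ ≤ ∏ j : Fin N × Fin r, (L * if i.1 = j.1 then x ^ 3 else 1) := by
        refine Finset.prod_le_prod_of_subset_of_one_le (Finset.erase_subset _ _)
          (fun j _ => ?_) fun j _ _ => ?_
        · split_ifs <;> positivity
        · split_ifs <;> nlinarith
    _ = _ := by
        rw [Finset.prod_mul_distrib, Finset.prod_const, Finset.card_univ, Fintype.card_prod,
          Fintype.card_fin, Fintype.card_fin, Fintype.prod_prod_type]
        congr 1
        rw [Finset.prod_eq_single i.1]
        · simp
        · intro b _ hb; simp [hb.symm]
        · simp

/-- Approximation of `e^{-su}` on `[x, x + 6 N]` by combinations of `p^{-s}`. The primes of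
`exists_nodes` are split into `Q` disjoint grids, the `q`-th grid taking every `Q`-th prime of each
group, so that primes of one grid in one group differ by at least `Q`. Averaging the `Q` interpolation
formulas divides the coefficients by `Q` and does not increase the error. -/
lemma block_of_params {x L R : ℝ} (hx : 30 ≤ x) (N r Q : ℕ) (hN : 1 ≤ N) (hQ1 : 1 ≤ Q)
    (hL : L = 6 * N) (hQ : (Q * r : ℝ) ≤ Real.exp x / x)
    (hgap : 1 / x ^ 3 ≤ Q / Real.exp (x + L)) (hk : 2 * (R * L) ≤ N * r) :
    ∃ (P : Finset ℕ) (ℓ : ℕ → ℝ → ℝ),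
      (∀ p ∈ P, p.Prime ∧ x ≤ Real.log p ∧ Real.log p < x + L) ∧
      (∀ p, Continuous (ℓ p)) ∧
      (∀ p ∈ P, ∀ u ∈ Icc x (x + L), |ℓ p u| ≤ L ^ (N * r) * (x ^ 3) ^ r / Q) ∧
      ∀ s : ℂ, ‖s‖ ≤ R → 0 ≤ s.re → ∀ u ∈ Icc x (x + L),
        ‖cexp (-s * u) - ∑ p ∈ P, (ℓ p u : ℂ) * cexp (-s * Real.log p)‖ ≤
          (1 + (N * r) * (L ^ (N * r) * (x ^ 3) ^ r)) *
            ((R * L) ^ (N * r) / (N * r).factorial * 2) := by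
  obtain ⟨node, hnode, hstep⟩ := exists_nodes hx N r Q hQ
  have hidx : ∀ (q : Fin Q) (a : Fin r), (q : ℕ) + Q * a < Q * r := by
    intro q a
    have h1 := q.2
    have h2 : (a : ℕ) + 1 ≤ r := a.2
    nlinarith
  let g : Fin Q × (Fin N × Fin r) → ℕ := fun J => node J.2.1 (J.1 + Q * J.2.2)
  have hgp : ∀ J, (g J).Prime ∧ x + 6 * (J.2.1 : ℝ) ≤ Real.log (g J) ∧
      Real.log (g J) ≤ x + 6 * (J.2.1 : ℝ) + 3 := fun J => hnode _ _ (hidx _ _)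
  have hNle : ∀ n : Fin N, (n : ℝ) + 1 ≤ N := fun n => by exact_mod_cast n.2
  have hgI : ∀ J, x ≤ Real.log (g J) ∧ Real.log (g J) < x + L := by
    intro J
    have h1 := hgp J
    have h2 := hNle J.2.1
    have h3 : (0:ℝ) ≤ (J.2.1 : ℕ) := by positivity
    constructor <;> linarith [h1.2.1, h1.2.2]
  -- different groups are at distance at least 3
  have hfar : ∀ J J' : Fin Q × (Fin N × Fin r), J.2.1 < J'.2.1 →
      Real.log (g J) + 3 ≤ Real.log (g J') := by
    intro J J' h
    have h1 := (hgp J).2.2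
    have h2 := (hgp J').2.1
    have h3 : (J.2.1 : ℝ) + 1 ≤ (J'.2.1 : ℕ) := by exact_mod_cast h
    linarith
  have hginj : Function.Injective g := by
    intro J J' h
    have h21 : J.2.1 = J'.2.1 := by
      rcases lt_trichotomy J.2.1 J'.2.1 with h' | h' | h'
      · have := hfar _ _ h'; rw [h] at this; linarith
      · exact h'
      · have := hfar _ _ h'; rw [h] at this; linarith
    have hj : (J.1 : ℕ) + Q * J.2.2 = J'.1 + Q * J'.2.2 := by
      have h' : node J.2.1 (J.1 + Q * J.2.2) = node J.2.1 (J'.1 + Q * J'.2.2) := by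
        rw [show node J.2.1 (J'.1 + Q * J'.2.2) = g J' by rw [h21]]
        exact h
      rcases lt_trichotomy ((J.1 : ℕ) + Q * J.2.2) (J'.1 + Q * J'.2.2) with hh | hh | hh
      · have := hstep J.2.1 _ (hidx _ _) _ hh; omega
      · exact hh
      · have := hstep J.2.1 _ (hidx _ _) _ hh; omega
    have hq : (J.1 : ℕ) = J'.1 := by
      have := congrArg (· % Q) hj
      simpa [Nat.add_mul_mod_self_left, Nat.mod_eq_of_lt J.1.2, Nat.mod_eq_of_lt J'.1.2] using this
    have ha : (J.2.2 : ℕ) = J'.2.2 := by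
      rw [hq] at hj
      exact Nat.eq_of_mul_eq_mul_left (by omega) (Nat.add_left_cancel hj)
    exact Prod.ext (Fin.ext hq) (Prod.ext h21 (Fin.ext ha))
  let v : Fin Q → Fin N × Fin r → ℝ := fun q i => Real.log (g (q, i))
  have hnear : ∀ (q : Fin Q) (n : Fin N) (a a' : Fin r), a < a' →
      1 / x ^ 3 ≤ v q (n, a') - v q (n, a) := by
    intro q n a a' haa
    have hlt : (q : ℕ) + Q * a < q + Q * a' := by
      have : (a : ℕ) < a' := haa
      nlinarith
    have h1 := hstep n _ (hidx q a') _ hlt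
    have h2 : Q ≤ (q + Q * a' : ℕ) - (q + Q * a) := by
      have : (a : ℕ) + 1 ≤ a' := haa
      have : Q * (a + 1) ≤ Q * a' := Nat.mul_le_mul_left _ this
      rw [Nat.mul_add] at this
      omega
    have h3 : g (q, (n, a)) + Q ≤ g (q, (n, a')) := by
      change node n (q + Q * a) + Q ≤ node n (q + Q * a')
      exact le_trans (Nat.add_le_add_left h2 _) h1
    have hp : (0:ℝ) < g (q, (n, a)) := by exact_mod_cast (hgp _).1.pos
    have hp' : (0:ℝ) < g (q, (n, a')) := by exact_mod_cast (hgp _).1.pos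
    have h4 : (g (q, (n, a)) : ℝ) + Q ≤ g (q, (n, a')) := by exact_mod_cast h3
    have h5 : (g (q, (n, a')) : ℝ) ≤ Real.exp (x + L) := by
      rw [← Real.log_le_iff_le_exp hp']; exact (hgI _).2.le
    have h6 := Real.one_sub_inv_le_log_of_pos (div_pos hp' hp)
    rw [Real.log_div hp'.ne' hp.ne'] at h6
    refine hgap.trans (le_trans ?_ h6)
    rw [inv_div, one_sub_div hp'.ne']
    exact div_le_div₀ (by linarith) (by linarith) hp' h5
  have hsep : ∀ q i j, i ≠ j → |(v q i - v q j)⁻¹| ≤ if i.1 = j.1 then x ^ 3 else 1 := by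
    intro q i j hij
    have hxpos : (0:ℝ) < x ^ 3 := by positivity
    rw [abs_inv]
    split_ifs with h
    · rw [inv_le_comm₀ _ hxpos, ← one_div]
      · obtain ⟨i1, i2⟩ := i
        obtain ⟨j1, j2⟩ := j
        simp only at h
        subst h
        rcases lt_trichotomy i2 j2 with h' | h' | h'
        · rw [abs_sub_comm]; exact (hnear q _ _ _ h').trans (le_abs_self _)
        · subst h'; exact absurd rfl hij
        · exact (hnear q _ _ _ h').trans (le_abs_self _)
      · rw [abs_pos, sub_ne_zero]
        intro hh
        have := Real.log_injOn_pos (by simpa using (hgp (q, i)).1.pos)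
          (by simpa using (hgp (q, j)).1.pos) hh
        have := hginj (by exact_mod_cast this)
        simp at this
        exact hij this
    · refine inv_le_one_of_one_le₀ ?_
      rcases lt_or_gt_of_ne h with h' | h'
      · have := hfar (q, i) (q, j) h'
        rw [abs_sub_comm]
        refine le_trans ?_ (le_abs_self _)
        simp only [v]; linarith
      · have := hfar (q, j) (q, i) h'
        refine le_trans ?_ (le_abs_self _)
        simp only [v]; linarith
  have hL1 : 1 ≤ L := by
    have : (1:ℝ) ≤ N := by exact_mod_cast hN
    linarith
  have hvI : ∀ q i, v q i ∈ Icc x (x + L) := fun q i => ⟨(hgI _).1, (hgI _).2.le⟩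
  have hvinj : ∀ q, Function.Injective (v q) := by
    intro q i j hij
    have := Real.log_injOn_pos (by simpa using (hgp (q, i)).1.pos)
          (by simpa using (hgp (q, j)).1.pos) hij
    have := hginj (by exact_mod_cast this)
    simpa using this
  have hbas : ∀ q i, ∀ u ∈ Icc x (x + L), |(Lagrange.basis Finset.univ (v q) i).eval u| ≤
      L ^ (N * r) * (x ^ 3) ^ r := fun q i u hu =>
    basis_bound (v q) (by linarith) hL1 (hvI q) hu (hsep q) i
  have hQ0 : (0:ℝ) < Q := by exact_mod_cast hQ1
  refine ⟨Finset.univ.map ⟨g, hginj⟩, fun p u => Function.extend g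
    (fun J => (Lagrange.basis Finset.univ (v J.1) J.2).eval u / Q) 0 p, ?_, ?_, ?_, ?_⟩
  · intro p hp
    obtain ⟨J, -, rfl⟩ := Finset.mem_map.mp hp
    exact ⟨(hgp J).1, hgI J⟩
  · intro p
    by_cases hp : ∃ J, g J = p
    · obtain ⟨J, rfl⟩ := hp
      simp only [hginj.extend_apply]
      exact (Polynomial.continuous _).div_const _
    · simp only [Function.extend_apply' _ _ _ hp]
      exact continuous_const
  · intro p hp u hu
    obtain ⟨J, -, rfl⟩ := Finset.mem_map.mp hp
    simp only [Function.Embedding.coeFn_mk, hginj.extend_apply]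
    rw [abs_div, abs_of_pos hQ0]
    gcongr
    exact hbas _ _ u hu
  · intro s hsR hs0 u hu
    rw [Finset.sum_map]
    simp only [Function.Embedding.coeFn_mk, hginj.extend_apply]
    rw [Fintype.sum_prod_type]
    have hQC : (Q : ℂ) ≠ 0 := by exact_mod_cast hQ0.ne'
    have heq : cexp (-s * u) - ∑ q : Fin Q, ∑ i : Fin N × Fin r,
        (((Lagrange.basis Finset.univ (v q) i).eval u / Q : ℝ) : ℂ) * cexp (-s * Real.log (g (q, i)))
        = (∑ q : Fin Q, (cexp (-s * u) - ∑ i : Fin N × Fin r,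
          ((Lagrange.basis Finset.univ (v q) i).eval u : ℝ) * cexp (-s * v q i))) / Q := by
      rw [eq_div_iff hQC, Finset.sum_sub_distrib, sub_mul, Finset.sum_const, Finset.card_univ,
        Fintype.card_fin, nsmul_eq_mul, mul_comm, Finset.sum_mul]
      congr 1
      refine Finset.sum_congr rfl fun q _ => ?_
      rw [Finset.sum_mul]
      refine Finset.sum_congr rfl fun i _ => ?_
      rw [Complex.ofReal_div, Complex.ofReal_natCast]
      change _ / _ * cexp (-s * (v q i)) * _ = _
      field_simp
    rw [heq, norm_div, Complex.norm_natCast, div_le_iff₀ hQ0]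
    refine (norm_sum_le _ _).trans ?_
    refine (Finset.sum_le_card_nsmul _ _ ((1 + (N * r) * (L ^ (N * r) * (x ^ 3) ^ r)) *
            ((R * L) ^ (N * r) / (N * r).factorial * 2)) fun q _ => ?_).trans ?_
    · have := lagrange_exp_error (v q) (hvinj q) (x := x) (L := L) (R := R) (by linarith) (hvI q) hu
        (fun i => hbas q i u hu) (by simpa using hk) hsR hs0
      simpa using this
    · rw [nsmul_eq_mul, Finset.card_univ, Fintype.card_fin, mul_comm]

lemma pow_div_factorial_le {a y : ℝ} {k : ℕ} (ha : 0 ≤ a) (hk : 0 < k)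
    (h : a * Real.exp 1 ≤ k * Real.exp (-y / 2)) :
    a ^ k / k.factorial ≤ Real.exp (-(k * y) / 2) := by
  have hk0 : (0:ℝ) < k := by exact_mod_cast hk
  have h1 := Real.pow_div_factorial_le_exp (k:ℝ) hk0.le k
  have hf : (0:ℝ) < k.factorial := by exact_mod_cast k.factorial_pos
  rw [div_le_iff₀ hf] at h1 ⊢
  have h2 : (a * Real.exp 1) ^ k ≤ (k * Real.exp (-y / 2)) ^ k :=
    pow_le_pow_left₀ (by positivity) h k
  rw [mul_pow, mul_pow, ← Real.exp_nat_mul, ← Real.exp_nat_mul, mul_one] at h2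
  have h3 : a ^ k * Real.exp k ≤ (Real.exp (-(k * y) / 2) * k.factorial) * Real.exp k := by
    calc _ ≤ _ := h2
      _ ≤ (Real.exp k * k.factorial) * Real.exp (k * (-y / 2)) := by gcongr
      _ = _ := by
        rw [show (k:ℝ) * (-y / 2) = -(k * y) / 2 by ring]; ring
  exact le_of_mul_le_mul_right h3 (Real.exp_pos _)

set_option maxHeartbeats 1000000 in
/-- For every `θ < 1` and `R`, on every far enough block `[x, x + L]` the exponentials `e^{-su}`
with `|s| ≤ R` and `Re s ≥ 0` are approximated by combinations of the `p^{-s}` with `p` prime and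
`log p` in the block. The coefficients are so small that integrating them over the block against a
density of size `e^{θ u}` gives at most `1/2`, and the error so integrated is at most `e^{-x}`. -/
lemma exists_block {θ R : ℝ} (hθ0 : 0 ≤ θ) (hθ : θ < 1) (hR : 0 < R) :
    ∃ L X : ℝ, 1 ≤ L ∧ ∀ x, X ≤ x → ∃ (P : Finset ℕ) (ℓ : ℕ → ℝ → ℝ),
      (∀ p ∈ P, p.Prime ∧ x ≤ Real.log p ∧ Real.log p < x + L) ∧
      (∀ p, Continuous (ℓ p)) ∧
      (∀ p ∈ P, ∀ u ∈ Icc x (x + L), |ℓ p u| * (Real.exp (θ * (x + L)) * L) ≤ 1 / 2) ∧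
      ∀ s : ℂ, ‖s‖ ≤ R → 0 ≤ s.re → ∀ u ∈ Icc x (x + L),
        ‖cexp (-s * u) - ∑ p ∈ P, (ℓ p u : ℂ) * cexp (-s * Real.log p)‖ *
          (Real.exp (θ * (x + L)) * L) ≤ Real.exp (-x) := by
  set η := 1 - θ with hη
  have hη0 : 0 < η := by linarith
  have hη1 : η ≤ 1 := by linarith
  -- With `y = log x`, the parameters are `L = 6 N`, `r ≈ η x / (24 y)` and `Q ≈ e^x / x ^ 2`. The
  -- Lagrange basis is at most `e^{η x / 6 + 4 y}`, well below `Q e^{-θ x} ≈ e^{η x}`, and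
  -- `N r y ≥ 10 x` makes the Taylor remainder of order `N r` at most `e^{-5 x}`.
  obtain ⟨N, hN⟩ := exists_nat_ge (240 / η + 1)
  have hN1 : (1:ℝ) ≤ N := by
    have : 0 < 240 / η := by positivity
    linarith
  have hN1' : 1 ≤ N := by exact_mod_cast hN1
  have hNη : 240 ≤ N * η := by
    rw [← div_le_iff₀ hη0]; linarith
  set L : ℝ := 6 * N with hL
  have hL6 : 6 ≤ L := by linarith
  have hlogL : 1 ≤ Real.log L := by
    rw [Real.le_log_iff_exp_le (by linarith)]
    linarith [Real.exp_one_lt_d9]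
  obtain ⟨Y, hY⟩ := exists_nat_ge (8 + L + 28 / η + (Real.log 4 + Real.log L + L) +
    N * Real.log L + R * L * Real.exp 1)
  have hlog4 : 0 ≤ Real.log 4 := Real.log_nonneg (by norm_num)
  refine ⟨L, Real.exp Y, by linarith, fun x hx => ?_⟩
  have hx0 : 0 < x := (Real.exp_pos _).trans_le hx
  set y := Real.log x with hy
  have hYy : (Y:ℝ) ≤ y := by rwa [hy, Real.le_log_iff_exp_le hx0]
  have hxy : Real.exp y = x := Real.exp_log hx0
  have p1 : 0 ≤ 28 / η := by positivity
  have p2 : 0 ≤ N * Real.log L := by positivity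
  have p3 : 0 ≤ R * L * Real.exp 1 := by positivity
  have c1 : 8 ≤ y := by linarith
  have c2 : L + 1 ≤ y := by linarith
  have c3 : 28 / η ≤ y := by linarith
  have c4 : Real.log 4 + Real.log L + L ≤ y := by linarith
  have c5 : N * Real.log L ≤ y := by linarith
  have c6 : R * L * Real.exp 1 ≤ y := by linarith
  have c5' : (N:ℝ) ≤ y := le_trans (by nlinarith) c5
  have c3' : 28 ≤ η * y := by rwa [div_le_iff₀ hη0, mul_comm] at c3
  have hxq : y ^ 2 / 2 ≤ x := by
    have := Real.quadratic_le_exp_of_nonneg (x := y) (by linarith)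
    rw [hxy] at this; linarith
  have hyy := mul_le_mul_of_nonneg_right c1 (by linarith : 0 ≤ y)
  have hx30 : 30 ≤ x := by linarith
  have hyx : y ≤ x := by linarith
  have c7 : 7 * y ≤ η * x / 2 := by
    have h1 := mul_le_mul_of_nonneg_left hxq hη0.le
    have h2 := mul_le_mul_of_nonneg_right c3' (by linarith : 0 ≤ y)
    linarith
  set r := ⌈η * x / (24 * y)⌉₊ with hr
  have hr1 : η * x / 24 ≤ r * y := by
    have : η * x / (24 * y) ≤ r := Nat.le_ceil _
    rw [div_le_iff₀ (by positivity)] at this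
    linarith
  have hr2 : r * y ≤ η * x / 24 + y := by
    have : (r:ℝ) < η * x / (24 * y) + 1 := Nat.ceil_lt_add_one (by positivity)
    have := mul_le_mul_of_nonneg_right this.le (by linarith : 0 ≤ y)
    rw [add_mul, one_mul] at this
    refine this.trans (le_of_eq ?_)
    field_simp
  have hr0 : (0:ℝ) ≤ r := by positivity
  have hηx : η * x ≤ x := by nlinarith
  have hrx : (r:ℝ) ≤ x := by
    have := mul_le_mul_of_nonneg_left c1 hr0
    linarith
  -- the number `N r` of nodes of a grid is between `10 x / log x` and `x`
  have hky : 10 * x ≤ (N * r : ℝ) * y := by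
    have h1 := mul_le_mul_of_nonneg_left hr1 (by linarith : (0:ℝ) ≤ N)
    have h2 := mul_le_mul_of_nonneg_right hNη hx0.le
    linarith
  have hkx : (N * r : ℝ) ≤ x := by
    have := mul_le_mul_of_nonneg_left c5' hr0
    linarith
  have hexpx : 2 * x ^ 2 ≤ Real.exp x := by
    have h1 := Real.pow_div_factorial_le_exp x hx0.le 3
    have : (Nat.factorial 3 : ℝ) = 6 := by norm_num [Nat.factorial]
    rw [this] at h1
    have h2 := mul_le_mul_of_nonneg_left hx30 (sq_nonneg x)
    have h3 := sq_nonneg x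
    linarith
  set Q := ⌊Real.exp x / x ^ 2⌋₊ with hQ
  have hQle : (Q:ℝ) ≤ Real.exp x / x ^ 2 := Nat.floor_le (by positivity)
  have hbig : 2 ≤ Real.exp x / x ^ 2 := by rwa [le_div_iff₀ (by positivity)]
  have hQge : Real.exp x / x ^ 2 / 2 ≤ Q := by
    have := Nat.lt_floor_add_one (Real.exp x / x ^ 2)
    rw [← hQ] at this
    linarith
  have hQ1 : (1:ℝ) ≤ Q := by linarith
  have hQ1' : 1 ≤ Q := by exact_mod_cast hQ1
  have hexpL : 2 * Real.exp L ≤ x := by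
    have h1 : Real.exp (L + 1) ≤ x := by rw [← hxy]; exact Real.exp_le_exp.mpr c2
    rw [Real.exp_add] at h1
    have h2 : (2:ℝ) ≤ Real.exp 1 := by linarith [Real.exp_one_gt_d9]
    have h3 := mul_le_mul_of_nonneg_left h2 (Real.exp_pos L).le
    linarith
  have hk2 : 2 * (R * L) ≤ N * r := by
    have h1 : R * L ≤ y := by
      refine le_trans ?_ c6
      have h2 : (1:ℝ) ≤ Real.exp 1 := Real.one_le_exp zero_le_one
      have h3 := mul_le_mul_of_nonneg_left h2 (by positivity : 0 ≤ R * L)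
      linarith
    by_contra hcon
    push Not at hcon
    have hy0 : 0 ≤ y := by linarith
    have h2 := mul_le_mul_of_nonneg_right hcon.le hy0
    have h3 := mul_le_mul_of_nonneg_right h1 hy0
    linarith
  obtain ⟨P, ℓ, hP, hc, hb, he⟩ := block_of_params (x := x) (L := L) (R := R) hx30 N r Q hN1' hQ1' hL
    (by
      calc (Q * r : ℝ) ≤ Real.exp x / x ^ 2 * x := by gcongr
        _ = _ := by field_simp)
    (by
      rw [le_div_iff₀ (Real.exp_pos _)]
      refine le_trans ?_ hQge
      rw [Real.exp_add, div_mul_eq_mul_div, div_div, div_le_div_iff₀ (by positivity) (by positivity)]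
      have h0 : 0 < Real.exp x * x ^ 2 := by positivity
      have h1 := mul_le_mul_of_nonneg_left hexpL h0.le
      linarith)
    hk2
  -- the bound of `basis_bound` written as an exponential
  set lam := (N * r : ℝ) * Real.log L + 3 * r * y with hlam
  have hLam : L ^ (N * r) * (x ^ 3) ^ r = Real.exp lam := by
    rw [hlam, Real.exp_add]
    congr 1
    · rw [← Nat.cast_mul, Real.exp_nat_mul, Real.exp_log (by linarith)]
    · rw [← pow_mul, show 3 * (r:ℝ) * y = ((3 * r : ℕ) : ℝ) * y by push_cast; ring,
        Real.exp_nat_mul, hxy]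
  have hlam_le : lam ≤ η * x / 6 + 4 * y := by
    have : (N * r : ℝ) * Real.log L ≤ r * y := by
      have := mul_le_mul_of_nonneg_left c5 hr0
      linarith
    linarith
  rw [hLam] at hb he
  clear_value lam
  have hLexp : L = Real.exp (Real.log L) := (Real.exp_log (by linarith)).symm
  refine ⟨P, ℓ, hP, hc, fun p hp u hu => ?_, fun s hsR hs0 u hu => ?_⟩
  · have hQinv : Real.exp lam / Q ≤ Real.exp lam * (2 * x ^ 2 / Real.exp x) := by
      rw [div_eq_mul_inv]
      refine mul_le_mul_of_nonneg_left ?_ (Real.exp_pos _).le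
      rw [inv_le_comm₀ (by linarith) (by positivity)]
      refine le_trans (le_of_eq ?_) hQge
      field_simp
    calc |ℓ p u| * (Real.exp (θ * (x + L)) * L)
        ≤ Real.exp lam * (2 * x ^ 2 / Real.exp x) * (Real.exp (θ * (x + L)) * L) := by
          refine mul_le_mul_of_nonneg_right ((hb p hp u hu).trans hQinv) (by positivity)
      _ = 1 / 2 * Real.exp (lam + Real.log 4 + 2 * y - x + θ * (x + L) + Real.log L) := by
          rw [Real.exp_add, Real.exp_add, Real.exp_sub, Real.exp_add, Real.exp_add,
            Real.exp_log (by norm_num), Real.exp_log (by linarith), two_mul y, Real.exp_add, hxy]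
          ring
      _ ≤ 1 / 2 * Real.exp 0 := by
          gcongr
          have h1 : θ * L ≤ L := mul_le_of_le_one_left (by linarith) hθ.le
          have h2 : θ * x = x - η * x := by rw [hη]; ring
          rw [mul_add]
          linarith
      _ = 1 / 2 := by simp
  · have hkpos : 0 < N * r := by
      rcases Nat.eq_zero_or_pos (N * r) with h | h
      · have : (N * r : ℝ) = 0 := by exact_mod_cast h
        rw [this] at hky; linarith
      · exact h
    have hfac := pow_div_factorial_le (a := R * L) (y := y) (k := N * r) (by positivity) hkpos (by
      refine c6.trans ?_
      have h1 : y ^ 2 / 8 ≤ Real.exp (y / 2) := by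
        have := Real.quadratic_le_exp_of_nonneg (x := y / 2) (by linarith)
        linarith
      have h2 : Real.exp (y / 2) = x * Real.exp (-y / 2) := by
        rw [← hxy, ← Real.exp_add]; congr 1; ring
      have h3 := mul_le_mul_of_nonneg_right hky (Real.exp_pos (-y / 2)).le
      have hy0 : 0 < y := by linarith
      refine le_of_mul_le_mul_left ?_ hy0
      have h4 := mul_le_mul_of_nonneg_left h1 hy0.le
      have h5 := mul_le_mul_of_nonneg_left c1 (sq_nonneg y)
      push_cast
      linarith)
    have hfac' : (R * L) ^ (N * r) / (N * r).factorial ≤ Real.exp (-(5 * x)) := by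
      refine hfac.trans (Real.exp_le_exp.mpr ?_)
      push_cast
      linarith
    have h1 : 1 + (N * r : ℝ) * Real.exp lam ≤ 2 * Real.exp (2 * x) := by
      have h2 : Real.exp lam ≤ Real.exp x := Real.exp_le_exp.mpr (by linarith)
      have h3 : (N * r : ℝ) ≤ Real.exp x := by linarith [Real.add_one_le_exp x]
      have h4 : (N * r : ℝ) * Real.exp lam ≤ Real.exp x * Real.exp x := by gcongr
      have h5 : (1:ℝ) ≤ Real.exp x := Real.one_le_exp hx0.le
      have h6 := mul_le_mul h5 h5 zero_le_one (by linarith)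
      rw [two_mul x, Real.exp_add]
      linarith
    calc _ ≤ (2 * Real.exp (2 * x) * (Real.exp (-(5 * x)) * 2)) * (Real.exp (x + L) * L) := by
          have hθx : θ * (x + L) ≤ x + L := mul_le_of_le_one_left (by linarith) hθ.le
          refine mul_le_mul ((he s hsR hs0 u hu).trans ?_) ?_ (by positivity) (by positivity)
          · gcongr
          · gcongr
      _ = Real.exp (Real.log 4 + Real.log L + L - 2 * x) := by
          rw [Real.exp_sub, Real.exp_add x L, Real.exp_add _ L, Real.exp_add (Real.log 4),
            Real.exp_log (by norm_num), Real.exp_log (by linarith), Real.exp_neg,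
            show 5 * x = x + 2 * x + 2 * x by ring, Real.exp_add, Real.exp_add]
          field_simp
          norm_num
      _ ≤ Real.exp (-x) := Real.exp_le_exp.mpr (by linarith)

/-! ### From densities to weights on primes -/

open MeasureTheory in
lemma integrableOn_Ico_exp {φ : ℝ → ℂ} (hφ : Measurable φ) {c d M : ℝ}
    (hM : ∀ u ∈ Ico c d, ‖φ u‖ ≤ M) {f : ℝ → ℂ} (hf : Continuous f) :
    IntegrableOn (fun u => φ u * f u) (Ico c d) := by
  obtain ⟨K, hK⟩ := (isCompact_Icc (a := c) (b := d)).exists_bound_of_continuousOn hf.continuousOn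
  refine Measure.integrableOn_of_bounded (M := M * K) (by simp)
    (hφ.mul hf.measurable).aestronglyMeasurable ?_
  refine (ae_restrict_iff' measurableSet_Ico).mpr (Eventually.of_forall fun u hu => ?_)
  rw [norm_mul]
  exact mul_le_mul (hM u hu) (hK u (Ico_subset_Icc_self hu)) (norm_nonneg _)
    ((norm_nonneg _).trans (hM u hu))

open MeasureTheory in
lemma differentiable_integral_Ico {φ : ℝ → ℂ} (hφ : Measurable φ) {c d M : ℝ}
    (hM : ∀ u ∈ Ico c d, ‖φ u‖ ≤ M) :
    Differentiable ℂ (fun s : ℂ => ∫ u in Ico c d, φ u * cexp (-s * u)) := by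
  intro s₀
  have hcont : ∀ s : ℂ, Continuous fun u : ℝ => cexp (-s * u) := fun s => by fun_prop
  refine (hasDerivAt_integral_of_dominated_loc_of_deriv_le (s := Metric.ball s₀ 1)
    (F := fun s (u : ℝ) => φ u * cexp (-s * u))
    (F' := fun s (u : ℝ) => φ u * (cexp (-s * u) * (-1 * u)))
    (bound := fun u => M * (Real.exp ((‖s₀‖ + 1) * (|c| + |d|)) * (|c| + |d|)))
    (Metric.ball_mem_nhds _ one_pos)
    (Eventually.of_forall fun s => (hφ.mul (hcont s).measurable).aestronglyMeasurable)
    (integrableOn_Ico_exp hφ hM (hcont s₀))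
    (hφ.mul (by fun_prop)).aestronglyMeasurable ?_ ?_ ?_).2.differentiableAt
  · refine (ae_restrict_iff' measurableSet_Ico).mpr (Eventually.of_forall fun u hu s hs => ?_)
    have hu' : |u| ≤ |c| + |d| := by
      rw [abs_le]
      constructor
      · linarith [hu.1, neg_abs_le c, abs_nonneg d]
      · linarith [hu.2, le_abs_self d, abs_nonneg c]
    have hs' : ‖s‖ ≤ ‖s₀‖ + 1 := by
      have := norm_sub_norm_le s s₀
      rw [Metric.mem_ball, dist_eq_norm] at hs
      linarith
    have hM0 : 0 ≤ M := (norm_nonneg _).trans (hM u hu)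
    rw [norm_mul, norm_mul, norm_mul, Complex.norm_real, Real.norm_eq_abs]
    have he : ‖cexp (-s * u)‖ ≤ Real.exp ((‖s₀‖ + 1) * (|c| + |d|)) := by
      refine (Complex.norm_exp_le_exp_norm _).trans (Real.exp_le_exp.mpr ?_)
      rw [norm_mul, norm_neg, Complex.norm_real, Real.norm_eq_abs]
      gcongr
    have hn : ‖(-1 : ℂ)‖ * |u| ≤ |c| + |d| := by simpa using hu'
    have := hM u hu
    gcongr
  · exact integrableOn_const (by simp)
  · refine Eventually.of_forall fun u s _ => ?_
    have h1 : HasDerivAt (fun s : ℂ => -s * (u : ℂ)) (-1 * u) s :=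
      (hasDerivAt_id s).neg.mul_const _
    exact (h1.cexp).const_mul _

open MeasureTheory in
/-- Gluing blocks: a density `φ` on the half-line is replaced by weights on primes, up to a
function which is analytic in the right half-plane. The weight of a prime `p` of block `b` is the
integral of `φ` against its coefficient `ℓ b p` over the block, and the block errors sum to an
analytic function because `R b → ∞` and `a b ≥ b`. -/
lemma glue_core (a θ R L : ℕ → ℝ) (ha0 : 0 ≤ a 0) (ha : ∀ b, a (b + 1) = a b + L b)
    (hL : ∀ b, 1 ≤ L b) (hθ0 : ∀ b, 0 ≤ θ b) (hθ : ∀ b, θ b < 1) (hR : Tendsto R atTop atTop)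
    (β : ℝ → ℕ) (hβ : ∀ b, ∀ u ∈ Ico (a b) (a (b + 1)), β u = b)
    (P : ℕ → Finset ℕ) (ℓ : ℕ → ℕ → ℝ → ℝ)
    (hP : ∀ b, ∀ p ∈ P b, p.Prime ∧ a b ≤ Real.log p ∧ Real.log p < a b + L b)
    (hc : ∀ b p, Continuous (ℓ b p))
    (hb : ∀ b, ∀ p ∈ P b, ∀ u ∈ Icc (a b) (a b + L b),
      |ℓ b p u| * (Real.exp (θ b * (a b + L b)) * L b) ≤ 1 / 2)
    (he : ∀ b, ∀ s : ℂ, ‖s‖ ≤ R b → 0 ≤ s.re → ∀ u ∈ Icc (a b) (a b + L b),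
        ‖cexp (-s * u) - ∑ p ∈ P b, (ℓ b p u : ℂ) * cexp (-s * Real.log p)‖ *
          (Real.exp (θ b * (a b + L b)) * L b) ≤ Real.exp (-a b))
    (φ : ℝ → ℂ) (hφ : Measurable φ) (hφ0 : ∀ u ∈ Ico 0 (a 0), ‖φ u‖ ≤ Real.exp u)
    (hφb : ∀ b, ∀ u ∈ Ico (a b) (a (b + 1)), ‖φ u‖ ≤ Real.exp (θ b * u)) :
    ∃ (w : ℕ → ℂ) (g : ℂ → ℂ), (∀ n, ‖w n‖ ≤ 1 / 2) ∧ (∀ n, ¬ n.Prime → w n = 0) ∧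
      (∀ s, 0 < s.re → DifferentiableAt ℂ g s) ∧
      ∀ s, 1 < s.re → LSeries w s = (∫ u in Ioi (0:ℝ), φ u * cexp (-s * u)) + g s := by
  classical
  have hstep : ∀ b, a b + 1 ≤ a (b + 1) := fun b => by linarith [ha b, hL b]
  have hmono : StrictMono a := strictMono_nat_of_lt_succ fun b => by linarith [hstep b]
  have hab : ∀ b : ℕ, (b : ℝ) ≤ a b := by
    intro b
    induction b with
    | zero => simpa using ha0
    | succ b ih => push_cast; linarith [hstep b]
  have hab0 : ∀ b, 0 ≤ a b := fun b => (Nat.cast_nonneg b).trans (hab b)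
  have hvol : ∀ b, volume.real (Ico (a b) (a (b + 1))) = L b := fun b => by
    rw [Real.volume_real_Ico_of_le (hmono.monotone (Nat.le_succ b)), ha]; ring
  have hIcc : ∀ b, ∀ u ∈ Ico (a b) (a (b + 1)), u ∈ Icc (a b) (a b + L b) := fun b u hu =>
    ⟨hu.1, by rw [← ha]; exact hu.2.le⟩
  have hφM : ∀ b, ∀ u ∈ Ico (a b) (a (b + 1)), ‖φ u‖ ≤ Real.exp (θ b * (a b + L b)) :=
    fun b u hu => (hφb b u hu).trans (Real.exp_le_exp.mpr
      (mul_le_mul_of_nonneg_left (hIcc b u hu).2 (hθ0 b)))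
  let wb : ℕ → ℕ → ℂ := fun b p => ∫ u in Ico (a b) (a (b + 1)), φ u * (ℓ b p u : ℂ)
  let w : ℕ → ℂ := fun p => if p ∈ P (β (Real.log p)) then wb (β (Real.log p)) p else 0
  have hβP : ∀ b, ∀ p ∈ P b, β (Real.log p) = b := fun b p hp =>
    hβ b _ ⟨(hP b p hp).2.1, by rw [ha]; exact (hP b p hp).2.2⟩
  have hwP : ∀ b, ∀ p ∈ P b, w p = wb b p := fun b p hp => by
    simp only [w, hβP b p hp, if_pos hp]
  have hwbnd : ∀ n, ‖w n‖ ≤ 1 / 2 := by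
    intro n
    by_cases hn : n ∈ P (β (Real.log n))
    · rw [hwP _ n hn]
      set b := β (Real.log n)
      have hpos : 0 < Real.exp (θ b * (a b + L b)) * L b :=
        mul_pos (Real.exp_pos _) (by linarith [hL b])
      refine (norm_setIntegral_le_of_norm_le_const
        (C := Real.exp (θ b * (a b + L b)) * ((1 / 2) / (Real.exp (θ b * (a b + L b)) * L b)))
        (by simp) fun u hu => ?_).trans ?_
      · rw [norm_mul, Complex.norm_real, Real.norm_eq_abs]
        have h1 := hφM b u hu
        have h2 : |ℓ b n u| ≤ (1 / 2) / (Real.exp (θ b * (a b + L b)) * L b) := by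
          rw [le_div_iff₀ hpos]; exact hb b n hn u (hIcc b u hu)
        gcongr
      · rw [hvol]
        have : L b ≠ 0 := by linarith [hL b]
        have := (Real.exp_pos (θ b * (a b + L b))).ne'
        apply le_of_eq
        field_simp
    · simp [w, hn]
  have hwprime : ∀ n, ¬ n.Prime → w n = 0 := by
    intro n hn
    by_contra h
    by_cases hn' : n ∈ P (β (Real.log n))
    · exact hn (hP _ n hn').1
    · simp [w, hn'] at h
  -- the error made on a block
  let e : ℕ → ℂ → ℂ := fun b s => ∑ p ∈ P b, w p * cexp (-s * Real.log p) -
    ∫ u in Ico (a b) (a (b + 1)), φ u * cexp (-s * u)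
  have hediff : ∀ b, Differentiable ℂ (e b) := by
    intro b
    refine Differentiable.sub ?_ (differentiable_integral_Ico hφ (hφM b))
    refine Differentiable.fun_sum fun p _ => ?_
    fun_prop
  have heb : ∀ b s, ‖s‖ ≤ R b → 0 ≤ s.re → ‖e b s‖ ≤ Real.exp (-a b) := by
    intro b s hsR hs0
    have hpos : 0 < Real.exp (θ b * (a b + L b)) * L b :=
      mul_pos (Real.exp_pos _) (by linarith [hL b])
    have h1 : e b s = -∫ u in Ico (a b) (a (b + 1)), φ u *
        (cexp (-s * u) - ∑ p ∈ P b, (ℓ b p u : ℂ) * cexp (-s * Real.log p)) := by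
      have h2 : ∀ u : ℝ, φ u *
        (cexp (-s * u) - ∑ p ∈ P b, (ℓ b p u : ℂ) * cexp (-s * Real.log p)) =
          φ u * cexp (-s * u) - ∑ p ∈ P b, φ u * (ℓ b p u : ℂ) * cexp (-s * Real.log p) := by
        intro u
        rw [mul_sub, Finset.mul_sum]
        simp only [mul_assoc]
      have hintegr : ∀ p, IntegrableOn (fun u => φ u * (ℓ b p u : ℂ)) (Ico (a b) (a (b + 1))) :=
        fun p => integrableOn_Ico_exp hφ (hφM b) (f := fun u => (ℓ b p u : ℂ))
          (Complex.continuous_ofReal.comp (hc b p))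
      simp only [h2]
      rw [integral_sub (integrableOn_Ico_exp hφ (hφM b) (f := fun u : ℝ => cexp (-s * u))
        (by fun_prop)) (integrable_finsetSum _ fun p _ => (hintegr p).mul_const _),
        integral_finsetSum _ fun p _ => (hintegr p).mul_const _, neg_sub]
      simp only [e]
      congr 1
      refine Finset.sum_congr rfl fun p hp => ?_
      rw [hwP b p hp, integral_mul_const]
    rw [h1, norm_neg]
    refine (norm_setIntegral_le_of_norm_le_const
        (C := Real.exp (θ b * (a b + L b)) *
          (Real.exp (-a b) / (Real.exp (θ b * (a b + L b)) * L b)))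
        (by simp) fun u hu => ?_).trans ?_
    · rw [norm_mul]
      have h1 := hφM b u hu
      have h2 := he b s hsR hs0 u (hIcc b u hu)
      rw [← le_div_iff₀ hpos] at h2
      gcongr
    · rw [hvol]
      have : L b ≠ 0 := by linarith [hL b]
      have := (Real.exp_pos (θ b * (a b + L b))).ne'
      apply le_of_eq
      field_simp
  have hexps : Summable fun b : ℕ => Real.exp (-(b : ℝ)) := Real.summable_exp_neg_nat
  have htail : ∀ T : ℝ, ∃ B, ∀ b, ∀ s : ℂ, ‖s‖ ≤ T → 0 ≤ s.re →
      ‖e (b + B) s‖ ≤ Real.exp (-(b : ℝ)) := by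
    intro T
    obtain ⟨B, hB⟩ := eventually_atTop.mp (hR.eventually_ge_atTop T)
    refine ⟨B, fun b s hs hs0 => (heb _ s (hs.trans (hB _ (by omega))) hs0).trans ?_⟩
    have := hab (b + B)
    push_cast at this
    have hB0 : (0:ℝ) ≤ B := by positivity
    exact Real.exp_le_exp.mpr (by linarith)
  have hesum : ∀ s : ℂ, 0 ≤ s.re → Summable fun b => e b s := by
    intro s hs
    obtain ⟨B, hB⟩ := htail ‖s‖
    rw [← summable_nat_add_iff B]
    exact Summable.of_norm_bounded hexps fun b => hB b s le_rfl hs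
  refine ⟨w, fun s => (∑' b, e b s) - ∫ u in Ico 0 (a 0), φ u * cexp (-s * u), hwbnd, hwprime,
    fun s hs => ?_, fun s hs => ?_⟩
  · refine DifferentiableAt.sub ?_ (differentiable_integral_Ico hφ (M := Real.exp (a 0))
      (fun u hu => (hφ0 u hu).trans (Real.exp_le_exp.mpr hu.2.le)) s)
    obtain ⟨B, hB⟩ := htail (‖s‖ + 1)
    have hopen : IsOpen {z : ℂ | ‖z‖ < ‖s‖ + 1 ∧ 0 < z.re} :=
      (isOpen_lt continuous_norm continuous_const).inter
        (isOpen_lt continuous_const Complex.continuous_re)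
    have hmem : {z : ℂ | ‖z‖ < ‖s‖ + 1 ∧ 0 < z.re} ∈ 𝓝 s := hopen.mem_nhds ⟨by simp, hs⟩
    have h1 : DifferentiableOn ℂ (fun z => ∑' b, e (b + B) z) {z : ℂ | ‖z‖ < ‖s‖ + 1 ∧ 0 < z.re} :=
      differentiableOn_tsum_of_summable_norm hexps (fun b => (hediff _).differentiableOn) hopen
        fun b z hz => hB b z hz.1.le hz.2.le
    have h2 : DifferentiableAt ℂ (fun z => ∑ b ∈ Finset.range B, e b z + ∑' b, e (b + B) z) s :=
      (DifferentiableAt.fun_sum fun b _ => hediff b s).add (h1.differentiableAt hmem)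
    refine h2.congr_of_eventuallyEq ?_
    filter_upwards [hmem] with z hz
    exact ((hesum z hz.2.le).sum_add_tsum_nat_add B).symm
  · have hsum : LSeriesSummable w s :=
      LSeriesSummable_of_bounded_of_one_lt_re (fun n _ => hwbnd n) hs
    have hfib := hsum.hasSum.tsum_fiberwise (fun n : ℕ => β (Real.log n))
    have hfib' : ∀ b, ∑' n : ((fun n : ℕ => β (Real.log n)) ⁻¹' {b}), LSeries.term w s n =
        ∑ p ∈ P b, w p * cexp (-s * Real.log p) := by
      intro b
      rw [_root_.tsum_subtype ((fun n : ℕ => β (Real.log n)) ⁻¹' {b}) (LSeries.term w s),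
        tsum_eq_sum (s := P b)]
      · refine Finset.sum_congr rfl fun p hp => ?_
        have hp0 : p ≠ 0 := (hP b p hp).1.ne_zero
        rw [indicator_of_mem (by simpa using hβP b p hp), LSeries.term_of_ne_zero hp0,
          Complex.cpow_def_of_ne_zero (by exact_mod_cast hp0), div_eq_mul_inv, ← Complex.exp_neg,
          ← Complex.natCast_log]
        congr 2
        ring
      · intro n hn
        by_cases hn' : β (Real.log n) = b
        · have hw0 : w n = 0 := by simp [w, hn', hn]
          simp [LSeries.term_def, hw0]
        · exact indicator_of_notMem (by simpa using hn') _
    simp only [hfib'] at hfib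
    have hU : ⋃ b, Ico (a b) (a (b + 1)) = Ici (a 0) :=
      iUnion_Ico_map_succ_eq_Ici (fun b => hmono.monotone bot_le) (fun h => by
        obtain ⟨M, hM⟩ := h
        obtain ⟨k, hk⟩ := exists_nat_gt M
        exact absurd (hM ⟨k, rfl⟩) (not_le.mpr (hk.trans_le (hab k))))
    have hφall : ∀ u ∈ Ici (0:ℝ), ‖φ u‖ ≤ Real.exp u := by
      intro u hu
      by_cases hu0 : u < a 0
      · exact hφ0 u ⟨hu, hu0⟩
      · have hu1 : u ∈ ⋃ b, Ico (a b) (a (b + 1)) := by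
          rw [hU]; exact not_lt.mp hu0
        obtain ⟨b, hb⟩ := mem_iUnion.mp hu1
        refine (hφb b u hb).trans (Real.exp_le_exp.mpr ?_)
        exact mul_le_of_le_one_left hu (hθ b).le
    have hintegr : IntegrableOn (fun u : ℝ => φ u * cexp (-s * u)) (Ici 0) := by
      rw [integrableOn_Ici_iff_integrableOn_Ioi]
      refine Integrable.mono' (exp_neg_integrableOn_Ioi 0 (sub_pos.mpr hs))
        (hφ.mul (by fun_prop)).aestronglyMeasurable ?_
      refine (ae_restrict_iff' measurableSet_Ioi).mpr (Eventually.of_forall fun u hu => ?_)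
      rw [norm_mul, Complex.norm_exp]
      calc _ ≤ Real.exp u * Real.exp (-s * u : ℂ).re :=
            mul_le_mul_of_nonneg_right (hφall u (Ioi_subset_Ici_self hu)) (Real.exp_pos _).le
        _ = _ := by
          rw [← Real.exp_add]
          congr 1
          simp
          ring
    have hI : HasSum (fun b => ∫ u in Ico (a b) (a (b + 1)), φ u * cexp (-s * u))
        (∫ u in Ici (a 0), φ u * cexp (-s * u)) := by
      rw [← hU]
      exact hasSum_integral_iUnion (fun b => measurableSet_Ico)
        hmono.monotone.pairwise_disjoint_on_Ico_succ
        (by rw [hU]; exact hintegr.mono_set (Ici_subset_Ici.mpr ha0))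
    have hE := (hfib.sub hI).tsum_eq
    have hsplit : ∫ u in Ici (0:ℝ), φ u * cexp (-s * u) =
        (∫ u in Ico 0 (a 0), φ u * cexp (-s * u)) + ∫ u in Ici (a 0), φ u * cexp (-s * u) := by
      have hd : Disjoint (Ico 0 (a 0)) (Ici (a 0)) :=
        Set.disjoint_left.mpr fun u hu hu' => absurd hu.2 (not_lt.mpr hu')
      rw [← setIntegral_union hd measurableSet_Ici (hintegr.mono_set Ico_subset_Ici_self)
        (hintegr.mono_set (Ici_subset_Ici.mpr ha0)), Ico_union_Ici_eq_Ici ha0]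
    rw [← integral_Ici_eq_integral_Ioi, hsplit]
    change _ = _ + (∑' b, e b s - _)
    simp only [e]
    rw [hE, LSeries]
    ring

open MeasureTheory in
/-- For a suitable `ϑ → 1`, every density `φ` on the half-line of size at most `e^{ϑ(u) u}` is
replaced by weights on primes of size at most `1/2`. The half-line is cut into blocks on which
`exists_block` is applied with `θ → 1` and `R → ∞` slowly enough for the blocks to be far out. -/
lemma exists_gluing : ∃ ϑ : ℝ → ℝ, (∀ u, 0 ≤ ϑ u) ∧ (∀ u, ϑ u ≤ 1) ∧ Tendsto ϑ atTop (𝓝 1) ∧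
    ∀ φ : ℝ → ℂ, Measurable φ → (∀ u, 0 ≤ u → ‖φ u‖ ≤ Real.exp (ϑ u * u)) →
    ∃ (w : ℕ → ℂ) (g : ℂ → ℂ), (∀ n, ‖w n‖ ≤ 1 / 2) ∧ (∀ n, ¬ n.Prime → w n = 0) ∧
      (∀ s, 0 < s.re → DifferentiableAt ℂ g s) ∧
      ∀ s, 1 < s.re → LSeries w s = (∫ u in Ioi (0:ℝ), φ u * cexp (-s * u)) + g s := by
  classical
  let θ : ℕ → ℝ := fun i => 1 - 1 / ((i : ℝ) + 1)
  let R : ℕ → ℝ := fun i => (i : ℝ) + 1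
  have hθ0 : ∀ i, 0 ≤ θ i := fun i => by
    have h : (0:ℝ) < (i : ℝ) + 1 := by positivity
    have : 1 / ((i : ℝ) + 1) ≤ 1 := by rw [div_le_one h]; linarith
    simp only [θ]; linarith
  have hθ : ∀ i, θ i < 1 := fun i => by
    have : 0 < 1 / ((i : ℝ) + 1) := by positivity
    simp only [θ]; linarith
  have hR : ∀ i, 0 < R i := fun i => by simp only [R]; positivity
  choose L X hL hblock using fun i => exists_block (hθ0 i) (hθ i) (hR i)
  -- block number `b`, with left end `x`, uses the parameters `θ i`, `R i` with `i = σ b x`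
  let σ : ℕ → ℝ → ℕ := fun b x => Nat.findGreatest (fun i => X i ≤ x) b
  let a : ℕ → ℝ := fun b => Nat.rec (motive := fun _ => ℝ) (max (X 0) 0) (fun b x => x + L (σ b x)) b
  have ha : ∀ b, a (b + 1) = a b + L (σ b (a b)) := fun b => rfl
  have ha0 : 0 ≤ a 0 := le_max_right _ _
  have hX0 : X 0 ≤ a 0 := le_max_left _ _
  have hstep : ∀ b, a b + 1 ≤ a (b + 1) := fun b => by linarith [ha b, hL (σ b (a b))]
  have hmono : StrictMono a := strictMono_nat_of_lt_succ fun b => by linarith [hstep b]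
  have hab : ∀ b : ℕ, (b : ℝ) ≤ a b := by
    intro b
    induction b with
    | zero => simpa using ha0
    | succ b ih => push_cast; linarith [hstep b]
  have hσX : ∀ b, X (σ b (a b)) ≤ a b := by
    intro b
    have h0 : X 0 ≤ a b := hX0.trans (hmono.monotone (Nat.zero_le b))
    exact Nat.findGreatest_spec (P := fun i : ℕ => X i ≤ a b) (m := 0) (n := b) (Nat.zero_le b) h0
  have hσ : Tendsto (fun b => σ b (a b)) atTop atTop := by
    refine tendsto_atTop.mpr fun i => ?_
    obtain ⟨k, hk⟩ := exists_nat_ge (X i)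
    filter_upwards [eventually_ge_atTop i, eventually_ge_atTop k] with b hb hb'
    exact Nat.le_findGreatest hb (hk.trans ((Nat.cast_le.mpr hb').trans (hab b)))
  have hβex : ∀ u : ℝ, ∃ b, u < a (b + 1) := fun u => by
    obtain ⟨k, hk⟩ := exists_nat_gt u
    exact ⟨k, hk.trans_le ((hab k).trans (hmono.monotone (Nat.le_succ k)))⟩
  let β : ℝ → ℕ := fun u => Nat.find (hβex u)
  have hβ : ∀ b, ∀ u ∈ Ico (a b) (a (b + 1)), β u = b := by
    intro b u hu
    refine (Nat.find_eq_iff _).mpr ⟨hu.2, fun n hn => ?_⟩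
    exact not_lt.mpr ((hmono.monotone hn).trans hu.1)
  have hβ0 : ∀ u, u < a 0 → β u = 0 := fun u hu =>
    (Nat.find_eq_zero _).mpr (hu.trans (hmono (Nat.lt_succ_self 0)))
  have hβt : Tendsto β atTop atTop := by
    refine tendsto_atTop.mpr fun B => ?_
    filter_upwards [eventually_ge_atTop (a B)] with u hu
    by_contra h
    push Not at h
    have h1 : u < a (β u + 1) := Nat.find_spec (hβex u)
    exact absurd (h1.trans_le (hmono.monotone h)) (not_lt.mpr hu)
  have hθt : Tendsto θ atTop (𝓝 1) := by
    have := (tendsto_one_div_add_atTop_nhds_zero_nat (𝕜 := ℝ)).const_sub 1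
    simpa [θ] using this
  refine ⟨fun u => θ (σ (β u) (a (β u))), fun u => hθ0 _, fun u => (hθ _).le,
    hθt.comp (hσ.comp hβt), fun φ hφ hφb => ?_⟩
  choose P ℓ hP hc hb he using fun b => hblock (σ b (a b)) (a b) (hσX b)
  refine glue_core a (fun b => θ (σ b (a b))) (fun b => R (σ b (a b))) (fun b => L (σ b (a b)))
    ha0 ha (fun b => hL _) (fun b => hθ0 _) (fun b => hθ _) ?_ β hβ P ℓ hP hc hb he φ hφ ?_ ?_
  · have h1 : Tendsto R atTop atTop :=
      tendsto_atTop_add_const_right _ _ tendsto_natCast_atTop_atTop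
    exact h1.comp hσ
  · intro u hu
    refine (hφb u hu.1).trans (Real.exp_le_exp.mpr ?_)
    exact mul_le_of_le_one_left hu.1 (hθ _).le
  · intro b u hu
    have h0 : 0 ≤ u := ha0.trans ((hmono.monotone (Nat.zero_le b)).trans hu.1)
    have := hφb u h0
    simpa only [hβ b u hu] using this

/-- A density `φ` of slightly subexponential size `e^{ϑ(u) u}` is realized, up to a function
analytic on `Re s > 0`, by a Dirichlet series over the primes whose coefficients are
`l`-th roots of unity. -/
lemma exists_unimodular_primes {l : ℕ} (hl : 3 ≤ l) :
    ∃ ϑ : ℝ → ℝ, (∀ u, 0 ≤ ϑ u) ∧ (∀ u, ϑ u ≤ 1) ∧ Tendsto ϑ atTop (𝓝 1) ∧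
    ∀ φ : ℝ → ℂ, Measurable φ → (∀ u, 0 ≤ u → ‖φ u‖ ≤ Real.exp (ϑ u * u)) →
    ∃ (c : ℕ → ℂ) (g : ℂ → ℂ), (∀ n, c n ^ l = 1) ∧
      (∀ s, 0 < s.re → DifferentiableAt ℂ g s) ∧
      ∀ s, 1 < s.re → LSeries (fun n => if n.Prime then c n else 0) s =
        (∫ u in Ioi (0:ℝ), φ u * cexp (-s * u)) + g s := by
  obtain ⟨ϑ, h0, h1, ht, H⟩ := exists_gluing
  refine ⟨ϑ, h0, h1, ht, fun φ hφ hb => ?_⟩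
  obtain ⟨w, g, hw, hwp, hg, hL⟩ := H φ hφ hb
  obtain ⟨c, hc, hsum⟩ := exists_rounding hl Nat.Prime w hw
  have hc1 : ∀ n, ‖c n‖ = 1 := fun n =>
    norm_eq_one_of_pow_eq_one (hc n) (by omega)
  let f : ℕ → ℂ := fun n => if n.Prime then c n - w n else 0
  have hf : ∀ n, ‖f n‖ ≤ 3 / 2 := by
    intro n
    simp only [f]
    split_ifs
    · linarith [norm_sub_le (c n) (w n), hc1 n, hw n]
    · norm_num
  obtain ⟨G, hG, hfG⟩ := exists_continuation_of_bounded_sums f (3/2) (2*l) hf hsum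
    (by simp [f, Nat.not_prime_zero])
  refine ⟨c, fun s => g s + G s, hc, fun s hs => (hg s hs).add (hG s hs), fun s hs => ?_⟩
  have hs1 : LSeriesSummable w s := LSeriesSummable_of_bounded_of_one_lt_re
    (m := 1/2) (fun n _ => hw n) hs
  have hs2 : LSeriesSummable f s := LSeriesSummable_of_bounded_of_one_lt_re
    (m := 3/2) (fun n _ => hf n) hs
  have hE : (fun n : ℕ => if n.Prime then c n else 0) = w + f := by
    funext n
    by_cases hn : n.Prime
    · simp [f, hn]
    · simp [f, hn, hwp n hn]
  rw [hE, LSeries_add hs1 hs2, hL s hs, hfG s hs]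
  ring

/-! ### Primary factors as exponentials of Laplace transforms -/

open MeasureTheory in
lemma integrableOn_pow_mul_cexp (n : ℕ) {z : ℂ} (hz : 0 < z.re) :
    IntegrableOn (fun u : ℝ => (u : ℂ) ^ n * cexp (-z * u)) (Ioi 0) := by
  have h := (integrableOn_exp_mul_Ioi (a := -(z.re / 2)) (by linarith) 0).const_mul
    ((n.factorial : ℝ) / (z.re / 2) ^ n)
  refine h.mono' (by fun_prop) ?_
  refine (ae_restrict_mem measurableSet_Ioi).mono fun u (hu : 0 < u) => ?_
  have h1 := Real.pow_div_factorial_le_exp (x := z.re / 2 * u) (by positivity) n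
  rw [norm_mul, norm_pow, Complex.norm_exp, Complex.norm_real, Real.norm_of_nonneg hu.le]
  have h2 : (-z * u).re = -(z.re / 2) * u + -(z.re / 2) * u := by simp; ring
  rw [h2, Real.exp_add, ← mul_assoc]
  refine mul_le_mul_of_nonneg_right ?_ (Real.exp_pos _).le
  have h3 : u ^ n ≤ n.factorial / (z.re / 2) ^ n * Real.exp (z.re / 2 * u) := by
    rw [div_mul_eq_mul_div, le_div_iff₀ (by positivity), ← mul_pow, mul_comm u]
    rw [div_le_iff₀ (by positivity)] at h1
    linarith
  calc u ^ n * Real.exp (-(z.re / 2) * u)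
      ≤ n.factorial / (z.re / 2) ^ n * Real.exp (z.re / 2 * u) * Real.exp (-(z.re / 2) * u) :=
        mul_le_mul_of_nonneg_right h3 (Real.exp_pos _).le
    _ = n.factorial / (z.re / 2) ^ n := by
        rw [mul_assoc, ← Real.exp_add]; simp

open MeasureTheory in
lemma integral_pow_mul_cexp (n : ℕ) {z : ℂ} (hz : 0 < z.re) :
    ∫ u in Ioi (0:ℝ), (u : ℂ) ^ n * cexp (-z * u) = n.factorial / z ^ (n + 1) := by
  have hz0 : z ≠ 0 := fun h => by simp [h] at hz
  induction n with
  | zero =>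
    have := integral_exp_mul_complex_Ioi (a := -z) (by simpa using hz) 0
    simpa using this
  | succ n ih =>
    have hd : ∀ u ∈ Ici (0:ℝ), HasDerivAt (fun u : ℝ => (u : ℂ) ^ (n + 1) * cexp (-z * u))
        ((n + 1) * ((u : ℂ) ^ n * cexp (-z * u)) - z * ((u : ℂ) ^ (n + 1) * cexp (-z * u))) u := by
      intro u _
      have h1 : HasDerivAt (fun x : ℂ => x ^ (n + 1) * cexp (-z * x))
          ((n + 1) * ((u : ℂ) ^ n * cexp (-z * u)) - z * ((u : ℂ) ^ (n + 1) * cexp (-z * u)))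
          (u : ℂ) := by
        have := (hasDerivAt_pow (n + 1) (u : ℂ)).mul
          (((hasDerivAt_id (u : ℂ)).const_mul (-z)).cexp)
        refine this.congr_deriv ?_
        simp
        ring
      exact h1.comp_ofReal
    have hlim : Tendsto (fun u : ℝ => (u : ℂ) ^ (n + 1) * cexp (-z * u)) atTop (𝓝 0) := by
      rw [tendsto_zero_iff_norm_tendsto_zero]
      refine (tendsto_rpow_mul_exp_neg_mul_atTop_nhds_zero (n + 1 : ℕ) z.re hz).congr' ?_
      filter_upwards [eventually_gt_atTop 0] with u hu
      rw [norm_mul, norm_pow, Complex.norm_exp, Complex.norm_real, Real.norm_of_nonneg hu.le,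
        Real.rpow_natCast]
      simp
    have hi := integrableOn_pow_mul_cexp n hz
    have hi' := integrableOn_pow_mul_cexp (n + 1) hz
    have h := integral_Ioi_of_hasDerivAt_of_tendsto' hd
      ((hi.const_mul _).sub (hi'.const_mul _)) hlim
    rw [integral_sub (hi.const_mul _) (hi'.const_mul _), integral_const_mul, integral_const_mul,
      ih] at h
    simp only [ofReal_zero, ne_eq, Nat.add_eq_zero_iff, one_ne_zero, and_false, not_false_eq_true,
      zero_pow, zero_mul, sub_zero] at h
    rw [sub_eq_zero] at h
    rw [Nat.factorial_succ, eq_div_iff (pow_ne_zero _ hz0)]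
    have h2 : (z ^ (n + 1)) ≠ 0 := pow_ne_zero _ hz0
    calc _ = z * (∫ u in Ioi (0:ℝ), (u : ℂ) ^ (n + 1) * cexp (-z * u)) * z ^ (n + 1) := by ring
      _ = _ := by rw [← h]; push_cast; field_simp

/-- The density `κ_K(u) = e^{-u} ∑_{n ≥ K} u^n / (n+1)!`, whose Laplace transform is the tail
`∑_{n > K} v^n / n` of the logarithmic series at `v = 1 / (1 + z)`. -/
noncomputable def kap (K : ℕ) (u : ℝ) : ℝ :=
  ∑' j : ℕ, Real.exp (-u) * (u ^ (j + K) / (j + K + 1).factorial)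

lemma summable_pow_div_factorial_add (K : ℕ) (u : ℝ) :
    Summable fun j : ℕ => u ^ (j + K) / (j + K).factorial :=
  (summable_nat_add_iff K).mpr (Real.summable_pow_div_factorial u)

lemma kap_term_le (n : ℕ) {u U : ℝ} (hu : 0 ≤ u) (hU : u ≤ U) :
    u ^ n / (n + 1).factorial ≤ U ^ n / n.factorial := by
  have h1 : (n.factorial : ℝ) ≤ (n + 1).factorial := by
    exact_mod_cast Nat.factorial_le (Nat.le_succ n)
  have h2 : (0:ℝ) < n.factorial := by exact_mod_cast Nat.factorial_pos n
  have h3 : 0 ≤ U ^ n := pow_nonneg (hu.trans hU) n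
  gcongr

lemma summable_kap (K : ℕ) {u : ℝ} (hu : 0 ≤ u) :
    Summable fun j : ℕ => Real.exp (-u) * (u ^ (j + K) / (j + K + 1).factorial) :=
  (Summable.of_nonneg_of_le (fun j => by positivity) (fun j => kap_term_le _ hu le_rfl)
    (summable_pow_div_factorial_add K u)).mul_left _

lemma kap_nonneg (K : ℕ) {u : ℝ} (hu : 0 ≤ u) : 0 ≤ kap K u :=
  tsum_nonneg fun j => by positivity

lemma kap_le_tail (K : ℕ) {u U : ℝ} (hu : 0 ≤ u) (hU : u ≤ U) :
    kap K u ≤ ∑' j : ℕ, U ^ (j + K) / (j + K).factorial := by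
  refine (summable_kap K hu).tsum_le_tsum (fun j => ?_) (summable_pow_div_factorial_add K U)
  have h1 : Real.exp (-u) ≤ 1 := Real.exp_le_one_iff.mpr (by linarith)
  calc _ ≤ 1 * (u ^ (j + K) / (j + K + 1).factorial) :=
        mul_le_mul_of_nonneg_right h1 (by positivity)
    _ ≤ _ := by rw [one_mul]; exact kap_term_le _ hu hU

lemma kap_le_one (K : ℕ) {u : ℝ} (hu : 0 ≤ u) : kap K u ≤ 1 := by
  have hs := Real.summable_pow_div_factorial u
  have h1 : kap K u ≤ ∑' j : ℕ, Real.exp (-u) * (u ^ (j + K) / (j + K).factorial) :=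
    (summable_kap K hu).tsum_le_tsum
      (fun j => mul_le_mul_of_nonneg_left (kap_term_le _ hu le_rfl) (Real.exp_pos _).le)
      ((summable_pow_div_factorial_add K u).mul_left _)
  rw [tsum_mul_left] at h1
  have h2 : ∑' j : ℕ, u ^ (j + K) / (j + K).factorial ≤ Real.exp u := by
    rw [Real.exp_eq_exp_ℝ, NormedSpace.exp_eq_tsum_div]
    have h3 := hs.sum_add_tsum_nat_add K
    have : 0 ≤ ∑ i ∈ Finset.range K, u ^ i / (i.factorial : ℝ) :=
      Finset.sum_nonneg fun i _ => by positivity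
    beta_reduce
    linarith
  calc kap K u ≤ Real.exp (-u) * ∑' j : ℕ, u ^ (j + K) / (j + K).factorial := h1
    _ ≤ Real.exp (-u) * Real.exp u := mul_le_mul_of_nonneg_left h2 (Real.exp_pos _).le
    _ = 1 := by rw [← Real.exp_add]; simp

lemma measurable_kap (K : ℕ) : Measurable (kap K) := by
  unfold kap
  fun_prop

/-- The tail `∑_{n > K} v^n / n` of the logarithmic series. -/
noncomputable def logTail (K : ℕ) (v : ℂ) : ℂ := ∑' j : ℕ, v ^ (j + K + 1) / ((j + K + 1 : ℕ) : ℂ)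

/-- The Weierstrass primary factor `(1 - v) exp (∑_{1 ≤ n ≤ K} v^n / n)`; the term `n = 0` is
`v ^ 0 / 0 = 0`. -/
noncomputable def primaryFactor (K : ℕ) (v : ℂ) : ℂ :=
  (1 - v) * cexp (∑ n ∈ Finset.range (K + 1), v ^ n / (n : ℂ))

lemma logTail_eq (K : ℕ) {v : ℂ} (hv : ‖v‖ < 1) :
    logTail K v = -log (1 - v) - ∑ n ∈ Finset.range (K + 1), v ^ n / (n : ℂ) := by
  have h := Complex.hasSum_taylorSeries_neg_log hv
  rw [← h.tsum_eq, ← h.summable.sum_add_tsum_nat_add (K + 1)]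
  simp [logTail, add_assoc]

lemma exp_neg_logTail (K : ℕ) {v : ℂ} (hv : ‖v‖ < 1) : cexp (-logTail K v) = primaryFactor K v := by
  have h1 : (1 - v) ≠ 0 := fun h => by
    rw [sub_eq_zero] at h; rw [← h] at hv; simp at hv
  rw [logTail_eq K hv, primaryFactor, neg_sub, sub_neg_eq_add, Complex.exp_add, Complex.exp_log h1,
    mul_comm]

lemma summable_logTail (K : ℕ) {r : ℝ} (h0 : 0 ≤ r) (hr : r < 1) :
    Summable fun j : ℕ => r ^ (j + K + 1) / ((j + K + 1 : ℕ) : ℝ) := by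
  refine Summable.of_nonneg_of_le (fun j => by positivity) (fun j => ?_)
    ((summable_geometric_of_lt_one h0 hr).mul_left (r ^ (K + 1)))
  rw [add_assoc j K 1, pow_add, mul_comm]
  refine div_le_self (by positivity) ?_
  push_cast
  have := Nat.cast_nonneg (α := ℝ) j
  have := Nat.cast_nonneg (α := ℝ) K
  linarith

lemma norm_logTail_le (K : ℕ) {v : ℂ} {r : ℝ} (hv : ‖v‖ ≤ r) (hr : r < 1) :
    ‖logTail K v‖ ≤ r ^ (K + 1) / (1 - r) := by
  have h0 : 0 ≤ r := (norm_nonneg v).trans hv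
  have hs := (summable_geometric_of_lt_one h0 hr).mul_left (r ^ (K + 1))
  have h := tsum_of_norm_bounded (f := fun j : ℕ => v ^ (j + K + 1) / ((j + K + 1 : ℕ) : ℂ))
    hs.hasSum (fun j => ?_)
  · rwa [tsum_mul_left, tsum_geometric_of_lt_one h0 hr, ← div_eq_mul_inv] at h
  · rw [norm_div, norm_pow, Complex.norm_natCast]
    have h1 : (1:ℝ) ≤ ((j + K + 1 : ℕ) : ℝ) := by exact_mod_cast Nat.le_add_left 1 _
    calc _ ≤ ‖v‖ ^ (j + K + 1) := div_le_self (by positivity) h1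
      _ ≤ r ^ (j + K + 1) := by gcongr
      _ = _ := by ring

open MeasureTheory in
/-- The Laplace transform of `kap K`. -/
lemma integral_kap (K : ℕ) {z : ℂ} (hz : 0 < z.re) :
    ∫ u in Ioi (0:ℝ), (kap K u : ℂ) * cexp (-z * u) = logTail K (1 / (1 + z)) := by
  have h1z : 0 < (1 + z).re := by simp; linarith
  let a : ℕ → ℝ → ℂ := fun j u =>
    ((1 / ((j + K + 1).factorial : ℂ)) * ((u : ℂ) ^ (j + K) * cexp (-(1 + z) * u)))
  have hai : ∀ j, IntegrableOn (a j) (Ioi 0) := fun j =>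
    (integrableOn_pow_mul_cexp (j + K) h1z).const_mul _
  have hintegr : ∀ j, ∫ u in Ioi (0:ℝ), a j u = (1 / (1 + z)) ^ (j + K + 1) / ((j + K + 1 : ℕ) : ℂ) := by
    intro j
    simp only [a]
    rw [integral_const_mul, integral_pow_mul_cexp _ h1z, Nat.factorial_succ]
    have h2 : ((j + K).factorial : ℂ) ≠ 0 := by exact_mod_cast Nat.factorial_ne_zero _
    have h3 : ((j + K + 1 : ℕ) : ℂ) ≠ 0 := Nat.cast_ne_zero.mpr (Nat.succ_ne_zero _)
    have h4 : 1 + z ≠ 0 := fun h => by rw [h] at h1z; simp at h1z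
    rw [Nat.cast_mul, div_pow, one_pow]
    field_simp
  have hnorm : ∀ j, ∫ u in Ioi (0:ℝ), ‖a j u‖ =
      (1 / (1 + z.re)) ^ (j + K + 1) / ((j + K + 1 : ℕ) : ℝ) := by
    intro j
    have e : ∀ u ∈ Ioi (0:ℝ), ‖a j u‖ = (1 / ((j + K + 1).factorial : ℝ)) *
        (u ^ (((j + K + 1 : ℕ) : ℝ) - 1) * Real.exp (-((1 + z.re) * u))) := by
      intro u hu
      simp only [a]
      rw [norm_mul, norm_mul, norm_pow, Complex.norm_exp, Complex.norm_real,
        Real.norm_of_nonneg (le_of_lt hu), norm_div, norm_one, Complex.norm_natCast]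
      have : ((j + K + 1 : ℕ) : ℝ) - 1 = ((j + K : ℕ) : ℝ) := by push_cast; ring
      rw [this, Real.rpow_natCast]
      have h5 : (-(1 + z) * (u : ℂ)).re = -((1 + z.re) * u) := by simp; ring
      rw [h5]
    rw [setIntegral_congr_fun measurableSet_Ioi e, integral_const_mul,
      Real.integral_rpow_mul_exp_neg_mul_Ioi (by positivity) (by linarith), Real.rpow_natCast]
    have : ((j + K + 1 : ℕ) : ℝ) = ((j + K : ℕ) : ℝ) + 1 := by push_cast; ring
    rw [this, Real.Gamma_nat_eq_factorial, Nat.factorial_succ]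
    have h2 : ((j + K).factorial : ℝ) ≠ 0 := by exact_mod_cast Nat.factorial_ne_zero _
    rw [Nat.cast_mul, this]
    have h3 : ((j + K : ℕ) : ℝ) + 1 ≠ 0 := by positivity
    field_simp
  have hsum : Summable fun j => ∫ u in Ioi (0:ℝ), ‖a j u‖ := by
    simp only [hnorm]
    refine summable_logTail K (by positivity) ?_
    rw [div_lt_one (by linarith)]; linarith
  have h := (hasSum_integral_of_summable_integral_norm hai hsum).tsum_eq
  simp only [hintegr] at h
  rw [logTail, h]
  refine setIntegral_congr_fun measurableSet_Ioi fun u (hu : 0 < u) => ?_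
  simp only [kap, a]
  rw [Complex.ofReal_tsum, ← tsum_mul_right]
  refine tsum_congr fun j => ?_
  push_cast
  have : cexp (-(1 + z) * u) = cexp (-u) * cexp (-z * u) := by
    rw [← Complex.exp_add]; congr 1; ring
  rw [this]
  ring

/-- The bound `A e^{σ u} κ_K(u) ≤ e^{ϑ(u) u}` holds on the whole half-line once `K` is large: for
large `u` because `σ < 1` and `ϑ → 1`, on compacts because `κ_K → 0`. -/
lemma exists_kap_le {ϑ : ℝ → ℝ} (h0 : ∀ u, 0 ≤ ϑ u) (ht : Tendsto ϑ atTop (𝓝 1))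
    {σ A : ℝ} (hσ0 : 0 ≤ σ) (hσ : σ < 1) (hA : 0 ≤ A) :
    ∃ K₀ : ℕ, ∀ K, K₀ ≤ K → ∀ u, 0 ≤ u → A * Real.exp (σ * u) * kap K u ≤ Real.exp (ϑ u * u) := by
  have e1 : ∀ᶠ u in atTop, (1 + σ) / 2 ≤ ϑ u := ht.eventually_const_le (by linarith)
  have e2 : ∀ᶠ u in atTop, A ≤ Real.exp ((1 - σ) / 2 * u) :=
    (Real.tendsto_exp_atTop.comp (tendsto_id.const_mul_atTop (by linarith))).eventually_ge_atTop A
  obtain ⟨U, hU⟩ := eventually_atTop.mp ((e1.and e2).and (eventually_ge_atTop 0))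
  have hU0 : 0 ≤ U := (hU U le_rfl).2
  have htail := tendsto_sum_nat_add (fun i : ℕ => U ^ i / (i.factorial : ℝ))
  have htail' := htail.const_mul (A * Real.exp (σ * U))
  rw [mul_zero] at htail'
  obtain ⟨K₀, hK⟩ := eventually_atTop.mp (htail'.eventually_le_const (zero_lt_one' ℝ))
  refine ⟨K₀, fun K hKK u hu => ?_⟩
  rcases le_total u U with h | h
  · calc A * Real.exp (σ * u) * kap K u
        ≤ A * Real.exp (σ * U) * ∑' j : ℕ, U ^ (j + K) / (j + K).factorial := by
          have := kap_le_tail K hu h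
          have := kap_nonneg K hu
          gcongr
      _ ≤ 1 := hK K hKK
      _ ≤ _ := Real.one_le_exp (mul_nonneg (h0 u) hu)
  · obtain ⟨⟨h1, h2⟩, _⟩ := hU u h
    calc A * Real.exp (σ * u) * kap K u
        ≤ Real.exp ((1 - σ) / 2 * u) * Real.exp (σ * u) * 1 := by
          have := kap_le_one K hu
          have := kap_nonneg K hu
          gcongr
      _ = Real.exp ((1 + σ) / 2 * u) := by rw [mul_one, ← Real.exp_add]; congr 1; ring
      _ ≤ _ := Real.exp_le_exp.mpr (mul_le_mul_of_nonneg_right h1 hu)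

/-! ### Weierstrass products in a half-plane -/

lemma finite_of_no_accPt {c : ℝ} {S : Set ℂ} (hS : ∀ ρ ∈ S, c < ρ.re ∧ ρ.re < 1)
    (hacc : ∀ z : ℂ, z.re ≠ c → ¬ AccPt z (𝓟 S)) {δ : ℝ} (hδ : 0 < δ) (R : ℝ) :
    {ρ | ρ ∈ S ∧ c + δ ≤ ρ.re ∧ |ρ.im| ≤ R}.Finite := by
  by_contra h
  have hK : IsCompact (Icc (c + δ) 1 ×ℂ Icc (-R) R) := isCompact_Icc.reProdIm isCompact_Icc
  obtain ⟨z, hz, hz'⟩ := Set.Infinite.exists_accPt_of_subset_isCompact h hK (by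
    rintro ρ ⟨h1, h2, h3⟩
    exact ⟨⟨h2, (hS ρ h1).2.le⟩, abs_le.mp h3⟩)
  refine hacc z ?_ (hz'.mono (principal_mono.mpr fun ρ hρ => hρ.1))
  have : c + δ ≤ z.re := hz.1.1
  linarith

lemma countable_of_no_accPt {c : ℝ} {S : Set ℂ} (hS : ∀ ρ ∈ S, c < ρ.re ∧ ρ.re < 1)
    (hacc : ∀ z : ℂ, z.re ≠ c → ¬ AccPt z (𝓟 S)) : S.Countable := by
  refine Set.Countable.mono (s₂ := ⋃ j : ℕ, {ρ | ρ ∈ S ∧ c + 1 / ((j : ℝ) + 1) ≤ ρ.re ∧ |ρ.im| ≤ j})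
    ?_ (Set.countable_iUnion fun j => (finite_of_no_accPt hS hacc (by positivity) _).countable)
  intro ρ hρ
  obtain ⟨j₁, hj₁⟩ := exists_nat_one_div_lt (sub_pos.mpr (hS ρ hρ).1)
  obtain ⟨j₂, hj₂⟩ := exists_nat_ge |ρ.im|
  refine mem_iUnion.mpr ⟨max j₁ j₂, hρ, ?_, hj₂.trans (by exact_mod_cast le_max_right _ _)⟩
  have h1 : 1 / (((max j₁ j₂ : ℕ) : ℝ) + 1) ≤ 1 / ((j₁ : ℝ) + 1) := by
    have : (j₁ : ℝ) ≤ (max j₁ j₂ : ℕ) := by exact_mod_cast le_max_left _ _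
    gcongr
  linarith

/-- Absorbs a multiplicity `M` into the decay `r ^ M` of a primary factor of degree at least `M`. -/
lemma nat_mul_pow_le {r : ℝ} (h0 : 0 ≤ r) (hr : r < 1) (M : ℕ) : M * r ^ M ≤ 1 / (1 - r) := by
  have h1 : (M : ℝ) * r ^ M ≤ ∑ k ∈ Finset.range M, r ^ k := by
    have := Finset.sum_le_sum (s := Finset.range M) (f := fun _ => r ^ M) (g := fun k => r ^ k)
      fun k hk => pow_le_pow_of_le_one h0 hr.le (Finset.mem_range.mp hk).le
    simpa using this
  refine h1.trans ?_
  rw [one_div, ← tsum_geometric_of_lt_one h0 hr]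
  exact (summable_geometric_of_lt_one h0 hr).sum_le_tsum _ fun k _ => by positivity

/-- The `n`-th power of the primary factor at `1 / (1 + s - ρ)` has order `n` at `ρ` and order `0` at
every other point `s₀ ≠ ρ - 1`. -/
lemma primaryFactor_zpow_local (K : ℕ) (n : ℤ) (ρ s₀ : ℂ) (h : 1 + (s₀ - ρ) ≠ 0) :
    ∃ g : ℂ → ℂ, AnalyticAt ℂ g s₀ ∧ g s₀ ≠ 0 ∧ ∀ᶠ s in 𝓝 s₀,
      primaryFactor K (1 / (1 + (s - ρ))) ^ n = (s - s₀) ^ (if ρ = s₀ then n else 0) * g s := by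
  let U : ℂ → ℂ := fun s =>
    cexp (∑ k ∈ Finset.range (K + 1), (1 / (1 + (s - ρ))) ^ k / (k : ℂ)) / (1 + (s - ρ))
  have hv : AnalyticAt ℂ (fun s : ℂ => 1 / (1 + (s - ρ))) s₀ :=
    analyticAt_const.div (by fun_prop) h
  have hU : AnalyticAt ℂ U s₀ := by
    refine AnalyticAt.div (AnalyticAt.cexp' ?_) (by fun_prop) h
    refine Finset.analyticAt_fun_sum _ fun k _ => ?_
    simp only [div_eq_mul_inv (_ ^ k)]
    exact (hv.pow k).mul analyticAt_const
  have hU0 : U s₀ ≠ 0 := div_ne_zero (Complex.exp_ne_zero _) h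
  have hev : ∀ᶠ s in 𝓝 s₀, 1 + (s - ρ) ≠ 0 :=
    ContinuousAt.eventually_ne (by fun_prop) h
  have hPF : ∀ s, 1 + (s - ρ) ≠ 0 → primaryFactor K (1 / (1 + (s - ρ))) = (s - ρ) * U s := by
    intro s hs
    simp only [primaryFactor, U]
    have : 1 - 1 / (1 + (s - ρ)) = (s - ρ) / (1 + (s - ρ)) := by field_simp; ring
    rw [this]; ring
  by_cases hρ : ρ = s₀
  · refine ⟨fun s => U s ^ n, hU.fun_zpow hU0, zpow_ne_zero _ hU0, ?_⟩
    filter_upwards [hev] with s hs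
    rw [hPF s hs, mul_zpow, if_pos hρ, hρ]
  · have h1 : s₀ - ρ ≠ 0 := sub_ne_zero.mpr (Ne.symm hρ)
    refine ⟨fun s => ((s - ρ) * U s) ^ n, ?_, zpow_ne_zero _ (mul_ne_zero h1 hU0), ?_⟩
    · exact ((analyticAt_id.sub analyticAt_const).mul hU).fun_zpow (mul_ne_zero h1 hU0)
    · filter_upwards [hev] with s hs
      rw [hPF s hs, if_neg hρ, zpow_zero, one_mul]

/-- The Weierstrass product `∏ E_{K_ρ}(1 / (1 + s - ρ)) ^ n_ρ` has at every `s₀` with `Re s₀ > c`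
the order `n_{s₀}`: finitely many factors are treated by `primaryFactor_zpow_local`, and the
others form the exponential of a locally uniformly convergent series. -/
lemma weierstrass_local {c : ℝ} (hc : 0 ≤ c) {S : Set ℂ} (hS : ∀ ρ ∈ S, c < ρ.re ∧ ρ.re < 1)
    (hacc : ∀ z : ℂ, z.re ≠ c → ¬ AccPt z (𝓟 S)) (n : ℂ → ℤ) (hn : ∀ s, s ∉ S → n s = 0)
    {e : S → ℕ} (he : Function.Injective e) {K : S → ℕ} (hK : ∀ ρ : S, e ρ + (n ρ).natAbs ≤ K ρ)
    {s₀ : ℂ} (hs₀ : c < s₀.re) :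
    ∃ h : ℂ → ℂ, AnalyticAt ℂ h s₀ ∧ h s₀ ≠ 0 ∧ ∀ᶠ s in 𝓝 s₀,
      ∏' ρ : S, primaryFactor (K ρ) (1 / (1 + (s - ρ))) ^ (n ρ) = (s - s₀) ^ (n s₀) * h s := by
  classical
  set δ : ℝ := (s₀.re - c) / 4 with hδ
  have hδ0 : 0 < δ := by rw [hδ]; linarith
  have hfin := finite_of_no_accPt hS hacc hδ0 (|s₀.im| + δ + 2)
  have hfin' := hfin.preimage (Subtype.val_injective (p := fun x => x ∈ S)).injOn
  let T : Finset S := hfin'.toFinset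
  have hT : ∀ ρ : S, ρ ∈ T ↔ c + δ ≤ (ρ : ℂ).re ∧ |(ρ : ℂ).im| ≤ |s₀.im| + δ + 2 := by
    intro ρ
    simp [T]
  set r : ℝ := max (1 / (1 + 2 * δ)) (1 / 2) with hr
  have hr0 : 0 ≤ r := by rw [hr]; positivity
  have hr1 : r < 1 := by
    rw [hr, max_lt_iff]
    refine ⟨?_, by norm_num⟩
    rw [div_lt_one (by linarith)]; linarith
  have hball : ∀ s ∈ Metric.ball s₀ δ, |s.re - s₀.re| < δ ∧ |s.im - s₀.im| < δ := by
    intro s hs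
    rw [Metric.mem_ball, dist_eq_norm] at hs
    have h1 := Complex.abs_re_le_norm (s - s₀)
    have h2 := Complex.abs_im_le_norm (s - s₀)
    rw [Complex.sub_re] at h1
    rw [Complex.sub_im] at h2
    exact ⟨h1.trans_lt hs, h2.trans_lt hs⟩
  -- every denominator stays in the right half-plane
  have hden : ∀ ρ : S, ∀ s ∈ Metric.ball s₀ δ, 0 < (1 + (s - (ρ : ℂ))).re := by
    intro ρ s hs
    have h1 := abs_lt.mp (hball s hs).1
    have h2 := (hS ρ ρ.2).2
    simp only [add_re, one_re, sub_re]
    linarith [h1.1]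
  have hden0 : ∀ ρ : S, ∀ s ∈ Metric.ball s₀ δ, 1 + (s - (ρ : ℂ)) ≠ 0 := by
    intro ρ s hs h
    have := hden ρ s hs
    rw [h] at this
    simp at this
  have hv : ∀ ρ : S, ρ ∉ T → ∀ s ∈ Metric.ball s₀ δ, ‖1 / (1 + (s - (ρ : ℂ)))‖ ≤ r := by
    intro ρ hρ s hs
    obtain ⟨h1, h2⟩ := hball s hs
    rw [abs_lt] at h1
    rw [norm_div, norm_one]
    by_cases h3 : c + δ ≤ (ρ : ℂ).re
    · have h4 : |s₀.im| + δ + 2 < |(ρ : ℂ).im| := by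
        by_contra h5
        exact hρ ((hT ρ).mpr ⟨h3, not_lt.mp h5⟩)
      refine le_trans ?_ (le_max_right _ _)
      refine one_div_le_one_div_of_le (by norm_num) ?_
      refine le_trans ?_ (Complex.abs_im_le_norm _)
      simp only [add_im, one_im, sub_im, zero_add]
      have h5 : |(ρ : ℂ).im| ≤ |s.im - (ρ : ℂ).im| + |s.im - s₀.im| + |s₀.im| := by
        have a1 := abs_sub_abs_le_abs_sub (ρ : ℂ).im s.im
        have a2 := abs_sub_abs_le_abs_sub s.im s₀.im
        rw [abs_sub_comm] at a1
        linarith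
      linarith
    · refine le_trans ?_ (le_max_left _ _)
      refine one_div_le_one_div_of_le (by linarith) ?_
      refine le_trans ?_ (Complex.re_le_norm _)
      simp only [add_re, one_re, sub_re]
      push Not at h3
      linarith [h1.1]
  let t : S → ℂ → ℂ := fun ρ s =>
    if ρ ∈ T then 0 else -(n ρ : ℂ) * logTail (K ρ) (1 / (1 + (s - (ρ : ℂ))))
  have htb : ∀ (ρ : S) (s : ℂ), s ∈ Metric.ball s₀ δ → ‖t ρ s‖ ≤ r ^ (e ρ) * (1 / (1 - r) ^ 2) := by
    intro ρ s hs
    have h1r : 0 < 1 - r := by linarith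
    simp only [t]
    split_ifs with h
    · rw [norm_zero]; positivity
    · rw [norm_mul, norm_neg, Complex.norm_intCast]
      have h1 := norm_logTail_le (K ρ) (hv ρ h s hs) hr1
      have h2 : |((n ρ : ℤ) : ℝ)| = ((n ρ).natAbs : ℝ) := by
        rw [Nat.cast_natAbs, Int.cast_abs]
      have h3 := nat_mul_pow_le hr0 hr1 (n ρ).natAbs
      have h4 : r ^ (K ρ + 1) ≤ r ^ (e ρ) * r ^ (n ρ).natAbs := by
        rw [← pow_add]
        exact pow_le_pow_of_le_one hr0 hr1.le ((hK ρ).trans (Nat.le_succ _))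
      rw [h2]
      calc ((n ρ).natAbs : ℝ) * ‖logTail (K ρ) (1 / (1 + (s - (ρ : ℂ))))‖
          ≤ (n ρ).natAbs * ((r ^ (e ρ) * r ^ (n ρ).natAbs) / (1 - r)) := by
            gcongr
            exact h1.trans (by gcongr)
        _ = r ^ (e ρ) * ((n ρ).natAbs * r ^ (n ρ).natAbs) / (1 - r) := by ring
        _ ≤ r ^ (e ρ) * (1 / (1 - r)) / (1 - r) := by gcongr
        _ = _ := by field_simp
  have hsum : Summable fun ρ : S => r ^ (e ρ) * (1 / (1 - r) ^ 2) :=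
    ((summable_geometric_of_lt_one hr0 hr1).comp_injective he).mul_right _
  have htd : ∀ ρ : S, DifferentiableOn ℂ (t ρ) (Metric.ball s₀ δ) := by
    intro ρ
    by_cases h : ρ ∈ T
    · have : t ρ = fun _ => 0 := by funext s; simp [t, h]
      rw [this]; exact differentiableOn_const _
    · have e1 : t ρ = fun s => -(n ρ : ℂ) * logTail (K ρ) (1 / (1 + (s - (ρ : ℂ)))) := by
        funext s; simp only [t, if_neg h]
      rw [e1]
      refine DifferentiableOn.const_mul ?_ _
      have e2 : ∀ s ∈ Metric.ball s₀ δ, logTail (K ρ) (1 / (1 + (s - (ρ : ℂ)))) =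
          -log (1 - 1 / (1 + (s - (ρ : ℂ)))) -
            ∑ k ∈ Finset.range (K ρ + 1), (1 / (1 + (s - (ρ : ℂ)))) ^ k / (k : ℂ) :=
        fun s hs => logTail_eq _ ((hv ρ h s hs).trans_lt hr1)
      refine DifferentiableOn.congr ?_ e2
      have hvd : DifferentiableOn ℂ (fun s : ℂ => 1 / (1 + (s - (ρ : ℂ)))) (Metric.ball s₀ δ) :=
        DifferentiableOn.div (by fun_prop) (by fun_prop) (hden0 ρ)
      refine DifferentiableOn.sub (DifferentiableOn.neg (DifferentiableOn.clog ?_ ?_)) ?_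
      · exact hvd.const_sub 1
      · intro s hs
        left
        have h6 := Complex.re_le_norm (1 / (1 + (s - (ρ : ℂ))))
        have h7 := hv ρ h s hs
        rw [sub_re, one_re]
        linarith
      · refine DifferentiableOn.fun_sum fun k _ => ?_
        exact (hvd.pow k).div_const _
  have hHd := differentiableOn_tsum_of_summable_norm hsum htd Metric.isOpen_ball htb
  have hHa : AnalyticAt ℂ (fun s => ∑' ρ : S, t ρ s) s₀ :=
    hHd.analyticAt (Metric.ball_mem_nhds s₀ hδ0)
  have hW : ∀ s ∈ Metric.ball s₀ δ, ∏' ρ : S, primaryFactor (K ρ) (1 / (1 + (s - ρ))) ^ (n ρ) =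
      (∏ ρ ∈ T, primaryFactor (K ρ) (1 / (1 + (s - ρ))) ^ (n ρ)) * cexp (∑' ρ : S, t ρ s) := by
    intro s hs
    have h1 : HasProd (fun ρ : S => cexp (t ρ s)) (cexp (∑' ρ : S, t ρ s)) :=
      (Summable.of_norm_bounded hsum fun ρ => htb ρ s hs).hasSum.cexp
    have h2 : HasProd (fun ρ : S => if ρ ∈ T then primaryFactor (K ρ) (1 / (1 + (s - ρ))) ^ (n ρ)
        else 1) (∏ ρ ∈ T, primaryFactor (K ρ) (1 / (1 + (s - ρ))) ^ (n ρ)) := by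
      have := hasProd_prod_of_ne_finset_one (L := SummationFilter.unconditional S) (s := T)
        (f := fun ρ : S => if ρ ∈ T then primaryFactor (K ρ) (1 / (1 + (s - ρ))) ^ (n ρ) else 1)
        (fun ρ hρ => if_neg hρ)
      rwa [Finset.prod_congr rfl fun ρ hρ => if_pos hρ] at this
    rw [← (h2.mul h1).tprod_eq]
    refine tprod_congr fun ρ => ?_
    by_cases h : ρ ∈ T
    · simp [t, h]
    · simp only [t, if_neg h, one_mul]
      rw [← exp_neg_logTail _ ((hv ρ h s hs).trans_lt hr1), ← Complex.exp_int_mul]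
      congr 1; ring
  have hs₀b : s₀ ∈ Metric.ball s₀ δ := Metric.mem_ball_self hδ0
  choose g hga hg0 hge using fun ρ : S =>
    primaryFactor_zpow_local (K ρ) (n ρ) ρ s₀ (hden0 ρ s₀ hs₀b)
  refine ⟨fun s => (∏ ρ ∈ T, g ρ s) * cexp (∑' ρ : S, t ρ s), ?_, ?_, ?_⟩
  · exact (Finset.analyticAt_fun_prod _ fun ρ _ => hga ρ).mul hHa.cexp'
  · exact mul_ne_zero (Finset.prod_ne_zero_iff.mpr fun ρ _ => hg0 ρ) (Complex.exp_ne_zero _)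
  · have hall : ∀ᶠ s in 𝓝 s₀, ∀ ρ ∈ T, primaryFactor (K ρ) (1 / (1 + (s - (ρ : ℂ)))) ^ (n ρ) =
        (s - s₀) ^ (if (ρ : ℂ) = s₀ then n ρ else 0) * g ρ s :=
      (Finset.eventually_all T).mpr fun ρ _ => hge ρ
    filter_upwards [hall, Metric.ball_mem_nhds s₀ hδ0] with s hs hsb
    rw [hW s hsb, Finset.prod_congr rfl hs, Finset.prod_mul_distrib, ← mul_assoc]
    congr 2
    by_cases h : s₀ ∈ S
    · have hmem : (⟨s₀, h⟩ : S) ∈ T := (hT _).mpr ⟨by simp only; linarith, by simp only; linarith⟩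
      rw [Finset.prod_eq_single_of_mem _ hmem]
      · simp
      · intro ρ _ hne
        rw [if_neg, zpow_zero]
        intro h'
        exact hne (Subtype.ext h')
    · rw [hn s₀ h, zpow_zero]
      refine Finset.prod_eq_one fun ρ _ => ?_
      rw [if_neg, zpow_zero]
      intro h'
      exact h (h' ▸ ρ.2)

open MeasureTheory in
/-- Prescribed zeros and poles in `Re s > c` are those of a function which for `Re s > 1` is the
exponential of the Laplace transform of a density of size at most `e^{ϑ(u) u}`. -/
lemma exists_density {ϑ : ℝ → ℝ} (h0 : ∀ u, 0 ≤ ϑ u) (h1 : ∀ u, ϑ u ≤ 1)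
    (ht : Tendsto ϑ atTop (𝓝 1)) {c : ℝ} (hc : 0 ≤ c) {S : Set ℂ}
    (hS : ∀ ρ ∈ S, c < ρ.re ∧ ρ.re < 1)
    (hacc : ∀ z : ℂ, z.re ≠ c → ¬ AccPt z (𝓟 S)) (n : ℂ → ℤ) (hn : ∀ s, s ∉ S → n s = 0) :
    ∃ (φ : ℝ → ℂ) (W : ℂ → ℂ), Measurable φ ∧ (∀ u, 0 ≤ u → ‖φ u‖ ≤ Real.exp (ϑ u * u)) ∧
      (∀ s, 1 < s.re → cexp (∫ u in Ioi (0:ℝ), φ u * cexp (-s * u)) = W s) ∧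
      ∀ s₀ : ℂ, c < s₀.re → ∃ h : ℂ → ℂ, AnalyticAt ℂ h s₀ ∧ h s₀ ≠ 0 ∧
        ∀ᶠ s in 𝓝 s₀, W s = (s - s₀) ^ (n s₀) * h s := by
  classical
  have hcount : Countable S := (countable_of_no_accPt hS hacc).to_subtype
  obtain ⟨e, he⟩ := exists_injective_nat S
  have hex : ∀ ρ : S, ∃ K : ℕ, e ρ + (n ρ).natAbs ≤ K ∧ ∀ u, 0 ≤ u →
      (|(n ρ : ℝ)| * 2 ^ (e ρ + 1)) * Real.exp ((ρ : ℂ).re * u) * kap K u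
        ≤ Real.exp (ϑ u * u) := by
    intro ρ
    obtain ⟨K₀, hK₀⟩ := exists_kap_le h0 ht (hc.trans (hS ρ ρ.2).1.le) (hS ρ ρ.2).2
      (A := |(n ρ : ℝ)| * 2 ^ (e ρ + 1)) (by positivity)
    exact ⟨max K₀ _, le_max_right _ _, hK₀ _ (le_max_left _ _)⟩
  choose K hK hKb using hex
  let q : S → ℝ → ℂ := fun ρ u => -(n ρ : ℂ) * (cexp (ρ * u) * kap (K ρ) u)
  have hq : ∀ ρ u, 0 ≤ u → ‖q ρ u‖ ≤ (1 / 2) ^ (e ρ + 1) * Real.exp (ϑ u * u) := by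
    intro ρ u hu
    have h := hKb ρ u hu
    simp only [q]
    rw [norm_mul, norm_mul, norm_neg, Complex.norm_intCast, Complex.norm_exp, Complex.norm_real,
      Real.norm_of_nonneg (kap_nonneg _ hu)]
    have e1 : ((ρ : ℂ) * u).re = (ρ : ℂ).re * u := by simp
    rw [e1, one_div, inv_pow, ← div_eq_inv_mul, le_div_iff₀ (by positivity)]
    linarith
  have hgeom : Summable fun k : ℕ => (1 / 2 : ℝ) ^ (k + 1) := by
    simpa [pow_succ] using summable_geometric_two.mul_right (1 / 2 : ℝ)
  have hgsum : ∑' k : ℕ, (1 / 2 : ℝ) ^ (k + 1) = 1 := by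
    simp only [pow_succ]
    rw [tsum_mul_right, tsum_geometric_two]; norm_num
  have hge : Summable fun ρ : S => (1 / 2 : ℝ) ^ (e ρ + 1) := hgeom.comp_injective he
  have hge1 : ∑' ρ : S, (1 / 2 : ℝ) ^ (e ρ + 1) ≤ 1 :=
    (tsum_comp_le_tsum_of_inj hgeom (fun _ => by positivity) he).trans hgsum.le
  have hqm : ∀ ρ, Measurable (q ρ) := by
    intro ρ
    have := measurable_kap (K ρ)
    simp only [q]
    fun_prop
  refine ⟨fun u => ∑' ρ : S, q ρ u,
    fun s => ∏' ρ : S, primaryFactor (K ρ) (1 / (1 + (s - ρ))) ^ (n ρ),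
    Measurable.tsum hqm, ?_, ?_, fun s₀ hs₀ => weierstrass_local hc hS hacc n hn he hK hs₀⟩
  · intro u hu
    refine (tsum_of_norm_bounded (hge.mul_right _).hasSum fun ρ => hq ρ u hu).trans ?_
    rw [tsum_mul_right]
    exact mul_le_of_le_one_left (Real.exp_pos _).le hge1
  · intro s hs
    let f : S → ℝ → ℂ := fun ρ u => q ρ u * cexp (-s * u)
    have hfb : ∀ ρ u, 0 < u → ‖f ρ u‖ ≤ (1 / 2) ^ (e ρ + 1) * Real.exp (-(s.re - 1) * u) := by
      intro ρ u hu
      simp only [f]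
      rw [norm_mul, Complex.norm_exp]
      have e1 : (-s * (u : ℂ)).re = -s.re * u := by simp
      have e2 : Real.exp (ϑ u * u) ≤ Real.exp u :=
        Real.exp_le_exp.mpr (mul_le_of_le_one_left hu.le (h1 u))
      calc ‖q ρ u‖ * Real.exp (-s * (u : ℂ)).re
          ≤ ((1 / 2) ^ (e ρ + 1) * Real.exp u) * Real.exp (-s.re * u) := by
            rw [e1]
            refine mul_le_mul_of_nonneg_right ((hq ρ u hu.le).trans ?_) (Real.exp_pos _).le
            exact mul_le_mul_of_nonneg_left e2 (by positivity)
        _ = _ := by rw [mul_assoc, ← Real.exp_add]; congr 2; ring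
    have hI := integrableOn_exp_mul_Ioi (a := -(s.re - 1)) (by linarith) 0
    have hfi : ∀ ρ, IntegrableOn (f ρ) (Ioi 0) := by
      intro ρ
      refine (hI.const_mul ((1 / 2) ^ (e ρ + 1))).mono' ?_ ?_
      · have := hqm ρ
        exact Measurable.aestronglyMeasurable (by simp only [f]; fun_prop)
      · exact (ae_restrict_mem measurableSet_Ioi).mono fun u hu => hfb ρ u hu
    have hns : Summable fun ρ => ∫ u in Ioi (0:ℝ), ‖f ρ u‖ := by
      refine Summable.of_nonneg_of_le (fun ρ => integral_nonneg fun _ => norm_nonneg _) (fun ρ => ?_)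
        (hge.mul_right (∫ u in Ioi (0:ℝ), Real.exp (-(s.re - 1) * u)))
      rw [← integral_const_mul]
      exact setIntegral_mono_on (hfi ρ).norm (hI.const_mul _) measurableSet_Ioi fun u hu => hfb ρ u hu
    have hsumI := hasSum_integral_of_summable_integral_norm hfi hns
    have hprod := hsumI.cexp
    have e1 : ∫ u in Ioi (0:ℝ), (∑' ρ : S, q ρ u) * cexp (-s * u) =
        ∫ u in Ioi (0:ℝ), ∑' ρ : S, f ρ u := by
      simp only [f, tsum_mul_right]
    rw [e1, ← hprod.tprod_eq]
    refine tprod_congr fun ρ => ?_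
    have hz : 0 < (s - (ρ : ℂ)).re := by
      rw [sub_re]; linarith [(hS ρ ρ.2).2]
    have hv : ‖1 / (1 + (s - (ρ : ℂ)))‖ < 1 := by
      rw [norm_div, norm_one, div_lt_one]
      · refine lt_of_lt_of_le ?_ (Complex.re_le_norm _)
        rw [add_re, one_re]; linarith
      · rw [norm_pos_iff]
        intro h
        have : (1 + (s - (ρ : ℂ))).re = 0 := by rw [h]; simp
        rw [add_re, one_re] at this
        linarith
    have e2 : ∫ u in Ioi (0:ℝ), f ρ u = -(n ρ : ℂ) * logTail (K ρ) (1 / (1 + (s - ρ))) := by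
      rw [← integral_kap (K ρ) hz, ← integral_const_mul]
      refine setIntegral_congr_fun measurableSet_Ioi fun u _ => ?_
      simp only [f, q]
      have : cexp (-(s - (ρ : ℂ)) * u) = cexp (ρ * u) * cexp (-s * u) := by
        rw [← Complex.exp_add]; congr 1; ring
      rw [this]; ring
    simp only [Function.comp_apply]
    rw [e2, ← exp_neg_logTail _ hv, ← Complex.exp_int_mul]
    congr 1; ring

/-! ### The Euler product -/

/-- The completely multiplicative function with value `c p` at every prime `p`, and `0` at `0`. -/
noncomputable def multExt (c : ℕ → ℂ) (n : ℕ) : ℂ :=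
  if n = 0 then 0 else n.factorization.prod fun p k => c p ^ k

lemma multExt_one (c : ℕ → ℂ) : multExt c 1 = 1 := by simp [multExt]

lemma multExt_mul (c : ℕ → ℂ) (m n : ℕ) : multExt c (m * n) = multExt c m * multExt c n := by
  by_cases hm : m = 0
  · simp [multExt, hm]
  by_cases hn : n = 0
  · simp [multExt, hn]
  rw [multExt, multExt, multExt, if_neg hm, if_neg hn, if_neg (mul_ne_zero hm hn),
    Nat.factorization_mul hm hn, Finsupp.prod_add_index' (by simp) (by simp [pow_add])]

lemma multExt_prime (c : ℕ → ℂ) {p : ℕ} (hp : p.Prime) : multExt c p = c p := by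
  rw [multExt, if_neg hp.ne_zero, hp.factorization, Finsupp.prod_single_index (by simp), pow_one]

lemma multExt_pow_eq_one {c : ℕ → ℂ} {l : ℕ} (hc : ∀ n, c n ^ l = 1) {n : ℕ} (hn : n ≠ 0) :
    multExt c n ^ l = 1 := by
  rw [multExt, if_neg hn, Finsupp.prod, ← Finset.prod_pow]
  refine Finset.prod_eq_one fun p _ => ?_
  rw [← pow_mul, mul_comm, pow_mul, hc, one_pow]

lemma norm_multExt_le {c : ℕ → ℂ} (hc : ∀ n, ‖c n‖ = 1) (n : ℕ) : ‖multExt c n‖ ≤ 1 := by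
  by_cases hn : n = 0
  · simp [multExt, hn]
  · rw [multExt, if_neg hn, Finsupp.prod, norm_prod]
    simp [hc]

lemma norm_natCast_cpow_neg {p : ℕ} (hp : 0 < p) (s : ℂ) :
    ‖(p : ℂ) ^ (-s)‖ = (p : ℝ) ^ (-s.re) := by
  rw [Complex.norm_natCast_cpow_of_pos hp]; simp

/-- The prime powers `p^k`, `k ≥ 2`, contribute to the logarithm of the Euler product a function
that is analytic on `Re s > 1/2`. -/
lemma differentiableAt_tsum_logTail {c : ℕ → ℂ} (hc : ∀ n, ‖c n‖ = 1) {s : ℂ} (hs : 1 / 2 < s.re) :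
    DifferentiableAt ℂ (fun s => ∑' p : Nat.Primes, logTail 1 (c p * (p : ℂ) ^ (-s))) s := by
  obtain ⟨σ, hσ, hσs⟩ := exists_between hs
  have hopen : IsOpen {z : ℂ | σ < z.re} := isOpen_lt continuous_const Complex.continuous_re
  set r : ℝ := (2:ℝ) ^ (-(1 / 2 : ℝ)) with hr
  have hr1 : r < 1 := Real.rpow_lt_one_of_one_lt_of_neg (by norm_num) (by norm_num)
  have hv : ∀ (p : Nat.Primes) (z : ℂ), z ∈ {z : ℂ | σ < z.re} →
      ‖c p * (p : ℂ) ^ (-z)‖ ≤ (p : ℝ) ^ (-σ) := by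
    intro p z hz
    have hp1 : (1:ℝ) ≤ p := by exact_mod_cast p.2.one_lt.le
    rw [norm_mul, hc, one_mul, norm_natCast_cpow_neg p.2.pos]
    exact Real.rpow_le_rpow_of_exponent_le hp1 (neg_le_neg (le_of_lt hz))
  have hpr : ∀ p : Nat.Primes, (p : ℝ) ^ (-σ) ≤ r := by
    intro p
    have hp2 : (2:ℝ) ≤ p := by exact_mod_cast p.2.two_le
    calc (p : ℝ) ^ (-σ) ≤ (p : ℝ) ^ (-(1 / 2 : ℝ)) :=
          Real.rpow_le_rpow_of_exponent_le (by linarith) (by linarith)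
      _ ≤ r := Real.rpow_le_rpow_of_nonpos (by norm_num) hp2 (by norm_num)
  have hsum : Summable fun p : Nat.Primes => (p : ℝ) ^ (-(2 * σ)) * (1 / (1 - r)) :=
    ((Real.summable_nat_rpow.mpr (by linarith)).comp_injective
      Nat.Primes.coe_nat_injective).mul_right _
  refine (differentiableOn_tsum_of_summable_norm hsum (fun p => ?_) hopen
    (fun p z hz => ?_)).differentiableAt (hopen.mem_nhds hσs)
  · have e : ∀ z ∈ {z : ℂ | σ < z.re}, logTail 1 (c p * (p : ℂ) ^ (-z)) =
        -log (1 - c p * (p : ℂ) ^ (-z)) - c p * (p : ℂ) ^ (-z) := by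
      intro z hz
      rw [logTail_eq 1 (((hv p z hz).trans (hpr p)).trans_lt hr1)]
      simp [Finset.sum_range_succ]
    refine DifferentiableOn.congr ?_ e
    have hd : DifferentiableOn ℂ (fun z : ℂ => c p * (p : ℂ) ^ (-z)) {z : ℂ | σ < z.re} := by
      intro z _
      refine DifferentiableAt.differentiableWithinAt ?_
      refine DifferentiableAt.const_mul (DifferentiableAt.const_cpow (by fun_prop) ?_) _
      left
      exact_mod_cast p.2.ne_zero
    refine ((DifferentiableOn.clog (hd.const_sub 1) fun z hz => ?_).neg).sub hd
    left
    have h1 := Complex.re_le_norm (c p * (p : ℂ) ^ (-z))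
    have h2 := (hv p z hz).trans (hpr p)
    rw [sub_re, one_re]
    linarith
  · have h := norm_logTail_le 1 (hv p z hz) ((hpr p).trans_lt hr1)
    refine h.trans ?_
    have hp0 : (0:ℝ) ≤ p := Nat.cast_nonneg _
    have e : ((p : ℝ) ^ (-σ)) ^ (1 + 1) = (p : ℝ) ^ (-(2 * σ)) := by
      rw [← Real.rpow_natCast, ← Real.rpow_mul hp0]; congr 1; push_cast; ring
    rw [e, mul_one_div]
    have := hpr p
    have h1r : 0 < 1 - r := by linarith
    gcongr

/-- The Euler product, with the contribution of the primes to its logarithm separated from that of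
the higher prime powers. -/
lemma helsonZeta_multExt {c : ℕ → ℂ} (hc : ∀ n, ‖c n‖ = 1) {s : ℂ} (hs : 1 < s.re) :
    helsonZeta (multExt c) s = cexp (LSeries (fun n => if n.Prime then c n else 0) s +
      ∑' p : Nat.Primes, logTail 1 (c p * (p : ℂ) ^ (-s))) := by
  have hs0 : s ≠ 0 := fun h => by rw [h] at hs; simp at hs; linarith
  let f : ℕ →*₀ ℂ :=
    { toFun := fun n => multExt c n * (n : ℂ) ^ (-s)
      map_zero' := by simp [multExt]
      map_one' := by simp [multExt_one]
      map_mul' := fun m n => by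
        rw [multExt_mul, Nat.cast_mul, Complex.natCast_mul_natCast_cpow]; ring }
  have hf : ∀ n, f n = multExt c n * (n : ℂ) ^ (-s) := fun n => rfl
  have hsum : Summable fun n => ‖f n‖ := by
    refine Summable.of_nonneg_of_le (fun _ => norm_nonneg _) (fun n => ?_)
      (Real.summable_nat_rpow.mpr (neg_lt_neg hs))
    rcases Nat.eq_zero_or_pos n with rfl | hn
    · rw [map_zero, norm_zero]; positivity
    · rw [hf, norm_mul, norm_natCast_cpow_neg hn]
      exact mul_le_of_le_one_left (by positivity) (norm_multExt_le hc n)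
  have hfp : ∀ p : Nat.Primes, f p = c p * (p : ℂ) ^ (-s) := fun p => by
    rw [hf, multExt_prime c p.2]
  have h1 : helsonZeta (multExt c) s = ∑' n, f n := by
    rw [hsum.of_norm.tsum_eq_zero_add, map_zero, zero_add, helsonZeta]
    refine tsum_congr fun n => ?_
    rw [hf]; push_cast; rfl
  have h2 : LSeries (fun n => if n.Prime then c n else 0) s = ∑' p : Nat.Primes, f p := by
    have e1 := tsum_subtype {p : ℕ | p.Prime} (fun n => f n)
    refine Eq.trans ?_ e1.symm
    rw [LSeries]
    refine tsum_congr fun n => ?_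
    by_cases hn : n.Prime
    · rw [Set.indicator_of_mem (show n ∈ {p : ℕ | p.Prime} from hn),
        LSeries.term_of_ne_zero hn.ne_zero, if_pos hn, hf, multExt_prime c hn, Complex.cpow_neg,
        div_eq_mul_inv]
    · rw [Set.indicator_of_notMem (show n ∉ {p : ℕ | p.Prime} from hn)]
      simp [LSeries.term, hn]
  have hfps : Summable fun p : Nat.Primes => f p :=
    hsum.of_norm.comp_injective Nat.Primes.coe_nat_injective
  have hlog : Summable fun p : Nat.Primes => -log (1 - f p) :=
    (hsum.of_norm.clog_one_sub.neg).comp_injective Nat.Primes.coe_nat_injective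
  have h3 : ∀ p : Nat.Primes, logTail 1 (c p * (p : ℂ) ^ (-s)) = -log (1 - f p) - f p := by
    intro p
    have hlt : ‖f p‖ < 1 := by
      rw [hfp, norm_mul, hc, one_mul, norm_natCast_cpow_neg p.2.pos]
      exact Real.rpow_lt_one_of_one_lt_of_neg (by exact_mod_cast p.2.one_lt) (by linarith)
    rw [← hfp, logTail_eq 1 hlt]
    simp [Finset.sum_range_succ]
  rw [h1, h2, ← EulerProduct.exp_tsum_primes_log_eq_tsum hsum]
  simp only [h3]
  rw [hlog.tsum_sub hfps]
  congr 1; ring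

/-! ### Prescribed zeros and poles -/

theorem helson_zeta_prescribed_zeros_poles_lth_roots
    (l : ℕ) (hl : 3 ≤ l)
    (SZ SP : Set ℂ) (mZ mP : ℂ → ℕ)
    (hZstrip : ∀ s ∈ SZ, 21 / 40 < s.re ∧ s.re < 1)
    (hPstrip : ∀ s ∈ SP, 21 / 40 < s.re ∧ s.re < 1)
    (hmZ : ∀ s ∈ SZ, 1 ≤ mZ s) (hmP : ∀ s ∈ SP, 1 ≤ mP s)
    (hdisj : Disjoint SZ SP)
    (hacc : ∀ z : ℂ, z.re ≠ 21 / 40 → ¬ AccPt z (𝓟 (SZ ∪ SP))) :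
    ∃ (χ : ℕ → ℂ) (F : ℂ → ℂ),
      CompletelyMultiplicative χ ∧
      (∀ n : ℕ, 1 ≤ n → χ n ∈ {z : ℂ | z ^ l = 1}) ∧
      MeromorphicOn F {s : ℂ | 21 / 40 < s.re} ∧
      (∀ s : ℂ, 1 < s.re → F s = helsonZeta χ s) ∧
      AnalyticOnNhd ℂ F ({s : ℂ | 21 / 40 < s.re} \ SP) ∧
      (∀ s : ℂ, 21 / 40 < s.re → s ∉ SP → (F s = 0 ↔ s ∈ SZ)) ∧
      (∀ s ∈ SZ, ZeroOfOrder F s (mZ s)) ∧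
      (∀ s ∈ SP, PoleOfOrder F s (mP s)) := by
  classical
  obtain ⟨ϑ, h0, h1, ht, H⟩ := exists_unimodular_primes hl
  let n : ℂ → ℤ := fun s => if s ∈ SZ then (mZ s : ℤ) else if s ∈ SP then -(mP s : ℤ) else 0
  have hnZ : ∀ s ∈ SZ, n s = mZ s := fun s hs => by simp [n, hs]
  have hnP : ∀ s ∈ SP, n s = -(mP s : ℤ) := fun s hs => by
    have : s ∉ SZ := fun h => Set.disjoint_left.mp hdisj h hs
    simp [n, hs, this]
  have hn0 : ∀ s, s ∉ SZ ∪ SP → n s = 0 := fun s hs => by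
    rw [Set.mem_union, not_or] at hs
    simp [n, hs.1, hs.2]
  obtain ⟨φ, W, hφm, hφb, hW, hloc⟩ := exists_density h0 h1 ht (c := 21 / 40) (by norm_num)
    (S := SZ ∪ SP) (fun ρ hρ => hρ.elim (hZstrip ρ) (hPstrip ρ)) hacc n hn0
  obtain ⟨c, g, hcl, hg, hL⟩ := H φ hφm hφb
  have hc1 : ∀ k, ‖c k‖ = 1 := fun k => norm_eq_one_of_pow_eq_one (hcl k) (by omega)
  let Q : ℂ → ℂ := fun s => ∑' p : Nat.Primes, logTail 1 (c p * (p : ℂ) ^ (-s))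
  let F : ℂ → ℂ := fun s => cexp (g s + Q s) * W s
  have hQa : ∀ s : ℂ, 21 / 40 < s.re → AnalyticAt ℂ (fun s => cexp (g s + Q s)) s := by
    intro s hs
    have hopen : IsOpen {z : ℂ | 21 / 40 < z.re} :=
      isOpen_lt continuous_const Complex.continuous_re
    have hd : DifferentiableOn ℂ (fun s => g s + Q s) {z : ℂ | 21 / 40 < z.re} := by
      intro z hz
      rw [Set.mem_ofPred_eq] at hz
      exact ((hg z (by linarith)).add (differentiableAt_tsum_logTail hc1
        (by linarith))).differentiableWithinAt
    exact AnalyticAt.cexp' (hd.analyticAt (hopen.mem_nhds hs))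
  -- near every point `F` is a power of the local coordinate times an analytic unit
  have hF : ∀ s₀ : ℂ, 21 / 40 < s₀.re → ∃ h : ℂ → ℂ, AnalyticAt ℂ h s₀ ∧ h s₀ ≠ 0 ∧
      ∀ᶠ s in 𝓝 s₀, F s = (s - s₀) ^ (n s₀) * h s := by
    intro s₀ hs₀
    obtain ⟨h, ha, hne, he⟩ := hloc s₀ hs₀
    refine ⟨fun s => cexp (g s + Q s) * h s, (hQa s₀ hs₀).mul ha,
      mul_ne_zero (Complex.exp_ne_zero _) hne, ?_⟩
    filter_upwards [he] with s hs
    simp only [F]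
    rw [hs]; ring
  have hFan : AnalyticOnNhd ℂ F ({s : ℂ | 21 / 40 < s.re} \ SP) := by
    rintro s ⟨hs, hsP⟩
    obtain ⟨h, ha, -, he⟩ := hF s hs
    have hnn : ∃ k : ℕ, n s = k := by
      by_cases hsZ : s ∈ SZ
      · exact ⟨_, hnZ s hsZ⟩
      · exact ⟨0, hn0 s (by simp [hsZ, hsP])⟩
    obtain ⟨k, hk⟩ := hnn
    refine AnalyticAt.congr (f := fun z => (z - s) ^ k * h z)
      (((analyticAt_id.sub analyticAt_const).pow k).mul ha) ?_
    filter_upwards [he] with z hz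
    rw [hz, hk, zpow_natCast]
  refine ⟨multExt c, F, ⟨multExt_one c, multExt_mul c⟩,
    fun k hk => multExt_pow_eq_one hcl (by omega), ?_, ?_, hFan, ?_, ?_, ?_⟩
  · intro s hs
    obtain ⟨h, ha, -, he⟩ := hF s hs
    have hm : MeromorphicAt (fun z => (z - s) ^ (n s) * h z) s :=
      (((analyticAt_id.sub analyticAt_const).meromorphicAt).zpow (n s)).mul ha.meromorphicAt
    exact hm.congr ((he.filter_mono nhdsWithin_le_nhds).mono fun z hz => hz.symm)
  · intro s hs
    simp only [F]
    rw [helsonZeta_multExt hc1 hs, hL s hs, ← hW s hs, ← Complex.exp_add]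
    congr 1; ring
  · intro s hs hsP
    obtain ⟨h, -, hne, he⟩ := hF s hs
    rw [he.self_of_nhds, sub_self]
    by_cases hsZ : s ∈ SZ
    · have h2 : (n s) ≠ 0 := by
        rw [hnZ s hsZ]
        have := hmZ s hsZ
        omega
      simp [zero_zpow _ h2, hsZ]
    · simp [hn0 s (by simp [hsZ, hsP]), hsZ, hne]
  · intro s hs
    obtain ⟨h, ha, hne, he⟩ := hF s (hZstrip s hs).1
    refine ⟨h, ha, hne, he.mono fun z hz => ?_⟩
    rw [hz, hnZ s hs, zpow_natCast]
  · intro s hs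
    obtain ⟨h, ha, hne, he⟩ := hF s (hPstrip s hs).1
    refine ⟨h, ha, hne, (he.filter_mono nhdsWithin_le_nhds).mono fun z hz => ?_⟩
    rw [hz, hnP s hs]
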